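/- Let Ω ⊂ X be an open set and let E ⊂ X be a μ-measurable set with P(E,Ω) < ∞. Then the sets I_E ∩ Ω and O_E ∩ Ω are 1-quasiopen, where I_E and O_E are the measure-theoretic interior and exterior of E. -/

import Mathlib

open MeasureTheory Filter Metric Set
open scoped Topology ENNReal NNReal symmDiff

noncomputable section

namespace PaperBV

/-- A rectifiable curve parametrized by arc-length: a `1`-Lipschitz map on `[0, len]`. -/
structure Curve (X : Type*) [MetricSpace X] where
  len : ℝ
  len_nonneg : 0 ≤ len
  toFun : ℝ → X
  lip : LipschitzOnWith 1 toFun (Set.Icc 0 len)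

variable {X : Type*} [MetricSpace X] [MeasurableSpace X] [BorelSpace X]

/-- The curve lies in the set `A`. -/
def Curve.In (γ : Curve X) (A : Set X) : Prop :=
  ∀ t ∈ Set.Icc (0 : ℝ) γ.len, γ.toFun t ∈ A

/-- The curve integral `∫_γ g ds` of a nonnegative function, for an
arc-length parametrized curve. -/
def Curve.integral (γ : Curve X) (g : X → ℝ≥0∞) : ℝ≥0∞ :=
  ∫⁻ t in Set.Icc (0 : ℝ) γ.len, g (γ.toFun t)

/-- The upper gradient inequality `|u(x) - u(y)| ≤ ∫_γ g ds` along the curve `γ`,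
where `x, y` are the endpoints of `γ`. -/
def UGIneq (u : X → ℝ) (g : X → ℝ≥0∞) (γ : Curve X) : Prop :=
  ENNReal.ofReal |u (γ.toFun 0) - u (γ.toFun γ.len)| ≤ γ.integral g

/-- `g` is an upper gradient of `u` on `X`: `g` is nonnegative (automatic in `ℝ≥0∞`),
Borel, and the upper gradient inequality holds along every curve. -/
def IsUpperGradient (u : X → ℝ) (g : X → ℝ≥0∞) : Prop :=
  Measurable g ∧ ∀ γ : Curve X, UGIneq u g γ

/-- A family of curves has zero `1`-modulus: there is a nonnegative Borel function
`ρ ∈ L¹(X)` whose curve integral is infinite along every curve of the family. -/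
def ZeroMod (μ : Measure X) (Γ : Set (Curve X)) : Prop :=
  ∃ ρ : X → ℝ≥0∞, Measurable ρ ∧ (∫⁻ x, ρ x ∂μ) < ∞ ∧ ∀ γ ∈ Γ, γ.integral ρ = ∞

/-- `g` is a `1`-weak upper gradient of `u` in `A`: `g` is nonnegative, `μ`-measurable,
and the upper gradient inequality holds along `1`-a.e. curve in `A`. -/
def IsWeakUpperGradientOn (μ : Measure X) (u : X → ℝ) (g : X → ℝ≥0∞) (A : Set X) : Prop :=
  AEMeasurable g μ ∧ ZeroMod μ {γ : Curve X | γ.In A ∧ ¬ UGIneq u g γ}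

/-- A nonnegative function `g` belongs to `L¹_loc(A)`. -/
def LIntegrableLocOn (μ : Measure X) (g : X → ℝ≥0∞) (A : Set X) : Prop :=
  ∀ x ∈ A, ∃ r > (0 : ℝ), (∫⁻ y in A ∩ Metric.ball x r, g y ∂μ) < ∞

/-- `g` is the minimal `1`-weak upper gradient of `u` in `A`: a `1`-weak upper gradient
satisfying `g ≤ g'` `μ`-a.e. in `A` for every `1`-weak upper gradient `g' ∈ L¹_loc(A)`. -/
def IsMinimalWUG (μ : Measure X) (u : X → ℝ) (g : X → ℝ≥0∞) (A : Set X) : Prop :=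
  IsWeakUpperGradientOn μ u g A ∧
    ∀ g' : X → ℝ≥0∞, IsWeakUpperGradientOn μ u g' A → LIntegrableLocOn μ g' A →
      ∀ᵐ x ∂(μ.restrict A), g x ≤ g' x

/-- The Newtonian norm `‖u‖_{N^{1,1}(A)}` (valued in `ℝ≥0∞`). -/
def NNorm (μ : Measure X) (A : Set X) (u : X → ℝ) : ℝ≥0∞ :=
  (∫⁻ x in A, ENNReal.ofReal |u x| ∂μ) +
    ⨅ (g : X → ℝ≥0∞) (_ : IsWeakUpperGradientOn μ u g A), ∫⁻ x in A, g x ∂μ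

/-- `u ∈ N^{1,1}(A)`. -/
def MemN11 (μ : Measure X) (A : Set X) (u : X → ℝ) : Prop :=
  NNorm μ A u < ∞

/-- `u ∈ N^{1,1}_loc(A)`: every point of `A` has a ball `B` with `u ∈ N^{1,1}(A ∩ B)`. -/
def MemN11Loc (μ : Measure X) (A : Set X) (u : X → ℝ) : Prop :=
  ∀ x ∈ A, ∃ r > (0 : ℝ), NNorm μ (A ∩ Metric.ball x r) u < ∞

/-- `u ∈ N^{1,1}(Ω')` for every bounded open `Ω' ⊆ X`. -/
def MemN11LocBounded (μ : Measure X) (u : X → ℝ) : Prop :=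
  ∀ Ω' : Set X, IsOpen Ω' → Bornology.IsBounded Ω' → NNorm μ Ω' u < ∞

/-- `u ∈ N^{1,1}_0(Ω)`: `u ∈ N^{1,1}(X)` and `u = 0` outside `Ω`. -/
def MemN110 (μ : Measure X) (Ω : Set X) (u : X → ℝ) : Prop :=
  MemN11 μ Set.univ u ∧ ∀ x ∉ Ω, u x = 0

/-- The `1`-capacity `capa₁(A) = inf {‖u‖_{N^{1,1}(X)} : u ∈ N^{1,1}(X), u ≥ 1 on A}`. -/
def capa1 (μ : Measure X) (A : Set X) : ℝ≥0∞ :=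
  ⨅ (u : X → ℝ) (_ : MemN11 μ Set.univ u) (_ : ∀ x ∈ A, 1 ≤ u x), NNorm μ Set.univ u

/-- `U` is `1`-quasiopen: for every `ε > 0` there is an open `G` with `capa₁(G) < ε`
such that `U ∪ G` is open. -/
def QuasiOpen (μ : Measure X) (U : Set X) : Prop :=
  ∀ ε : ℝ, 0 < ε → ∃ G : Set X, IsOpen G ∧ capa1 μ G < ENNReal.ofReal ε ∧ IsOpen (U ∪ G)

/-- `u ∈ L¹_loc(A)`. -/
def MemL1Loc (μ : Measure X) (A : Set X) (u : X → ℝ) : Prop :=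
  AEMeasurable u (μ.restrict A) ∧
    ∀ x ∈ A, ∃ r > (0 : ℝ), (∫⁻ y in A ∩ Metric.ball x r, ENNReal.ofReal |u y| ∂μ) < ∞

/-- `v i → u` in `L¹_loc(A)`: every `x ∈ A` has a ball `B` with `v i → u` in `L¹(A ∩ B)`. -/
def L1LocConv (μ : Measure X) (A : Set X) (v : ℕ → X → ℝ) (u : X → ℝ) : Prop :=
  ∀ x ∈ A, ∃ r > (0 : ℝ),
    Filter.Tendsto (fun i => ∫⁻ y in A ∩ Metric.ball x r, ENNReal.ofReal |v i y - u y| ∂μ)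
      Filter.atTop (𝓝 0)

/-- `u` is locally Lipschitz on `Ω`. -/
def LocLipOn (u : X → ℝ) (Ω : Set X) : Prop :=
  ∀ x ∈ Ω, ∃ r > (0 : ℝ), ∃ K : ℝ≥0, LipschitzOnWith K u (Ω ∩ Metric.ball x r)

/-- The total variation `‖Du‖(Ω)` of `u` in an open set `Ω`: the infimum of
`liminf_i ∫_Ω g_{v i} dμ` over sequences of locally Lipschitz functions `v i → u`
in `L¹_loc(Ω)`, where `g_{v i}` is the minimal `1`-weak upper gradient of `v i` in `Ω`. -/
def tvOpen (μ : Measure X) (Ω : Set X) (u : X → ℝ) : ℝ≥0∞ :=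
  ⨅ (v : ℕ → X → ℝ) (g : ℕ → X → ℝ≥0∞) (_ : ∀ i, LocLipOn (v i) Ω)
    (_ : ∀ i, IsMinimalWUG μ (v i) (g i) Ω) (_ : L1LocConv μ Ω v u),
    Filter.liminf (fun i => ∫⁻ x in Ω, g i x ∂μ) Filter.atTop

/-- The total variation `‖Du‖(A)` of `u` in an arbitrary set `A`:
`inf {‖Du‖(Ω) : Ω ⊇ A open}`. -/
def tv (μ : Measure X) (A : Set X) (u : X → ℝ) : ℝ≥0∞ :=
  ⨅ (Ω : Set X) (_ : IsOpen Ω) (_ : A ⊆ Ω), tvOpen μ Ω u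

/-- The perimeter `P(E, A) = ‖Dχ_E‖(A)` for arbitrary `A`. -/
def perim (μ : Measure X) (E A : Set X) : ℝ≥0∞ :=
  tv μ A (Set.indicator E (fun _ => (1 : ℝ)))

/-- The perimeter `P(E, Ω) = ‖Dχ_E‖(Ω)` for open `Ω`. -/
def perimOpen (μ : Measure X) (E Ω : Set X) : ℝ≥0∞ :=
  tvOpen μ Ω (Set.indicator E (fun _ => (1 : ℝ)))

/-- The measure `μ` is doubling with constant `Cd`. -/
def Doubling (μ : Measure X) (Cd : ℝ) : Prop :=
  1 ≤ Cd ∧ ∀ (x : X) (r : ℝ), 0 < r →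
    0 < μ (Metric.ball x (2 * r)) ∧
      μ (Metric.ball x (2 * r)) ≤ ENNReal.ofReal Cd * μ (Metric.ball x r) ∧
      μ (Metric.ball x r) < ∞

/-- The space supports a `(1,1)`-Poincaré inequality with constants `CP, lam`. -/
def Poincare (μ : Measure X) (CP lam : ℝ) : Prop :=
  1 ≤ CP ∧ 1 ≤ lam ∧ ∀ (x : X) (r : ℝ), 0 < r → ∀ (u : X → ℝ) (g : X → ℝ≥0∞),
    MemL1Loc μ Set.univ u → IsUpperGradient u g →
      ENNReal.ofReal (⨍ y in Metric.ball x r, |u y - ⨍ z in Metric.ball x r, u z ∂μ| ∂μ)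
        ≤ ENNReal.ofReal (CP * r) *
            ((∫⁻ y in Metric.ball x (lam * r), g y ∂μ) / μ (Metric.ball x (lam * r)))

/-- The restricted spherical Hausdorff content of codimension one. -/
def HR (μ : Measure X) (R : ℝ) (A : Set X) : ℝ≥0∞ :=
  ⨅ (c : ℕ → X) (r : ℕ → ℝ) (_ : ∀ i, 0 < r i ∧ r i ≤ R)
    (_ : A ⊆ ⋃ i, Metric.ball (c i) (r i)),
    ∑' i, μ (Metric.ball (c i) (r i)) / ENNReal.ofReal (r i)

/-- The codimension-one Hausdorff measure `H(A) = lim_{R → 0} H_R(A)`. -/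
def Hcodim (μ : Measure X) (A : Set X) : ℝ≥0∞ :=
  ⨆ (R : ℝ) (_ : 0 < R), HR μ R A

/-- The lower approximate limit `u^∧`. -/
def lowerApprox (μ : Measure X) (u : X → ℝ) (x : X) : EReal :=
  sSup ((fun t : ℝ => (t : EReal)) ''
    {t : ℝ | Filter.Tendsto
      (fun r => μ (Metric.ball x r ∩ {y | u y < t}) / μ (Metric.ball x r))
      (𝓝[>] (0 : ℝ)) (𝓝 0)})

/-- The upper approximate limit `u^∨`. -/
def upperApprox (μ : Measure X) (u : X → ℝ) (x : X) : EReal :=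
  sInf ((fun t : ℝ => (t : EReal)) ''
    {t : ℝ | Filter.Tendsto
      (fun r => μ (Metric.ball x r ∩ {y | t < u y}) / μ (Metric.ball x r))
      (𝓝[>] (0 : ℝ)) (𝓝 0)})

/-- `u ∈ BV_loc(X)`: `u ∈ L¹_loc(X)` with `‖Du‖(Ω') < ∞` for every bounded open `Ω'`. -/
def MemBVLoc (μ : Measure X) (u : X → ℝ) : Prop :=
  MemL1Loc μ Set.univ u ∧
    ∀ Ω' : Set X, IsOpen Ω' → Bornology.IsBounded Ω' → tvOpen μ Ω' u < ∞

/-- The measure-theoretic interior `I_E`. -/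
def mInterior (μ : Measure X) (E : Set X) : Set X :=
  {x | Filter.Tendsto (fun r => μ (Metric.ball x r \ E) / μ (Metric.ball x r))
    (𝓝[>] (0 : ℝ)) (𝓝 0)}

/-- The measure-theoretic exterior `O_E`. -/
def mExterior (μ : Measure X) (E : Set X) : Set X :=
  {x | Filter.Tendsto (fun r => μ (Metric.ball x r ∩ E) / μ (Metric.ball x r))
    (𝓝[>] (0 : ℝ)) (𝓝 0)}

/-- The measure-theoretic boundary `∂*E`: the points where both `E` and its complement
have positive upper density. -/
def mBoundary (μ : Measure X) (E : Set X) : Set X :=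
  {x | 0 < Filter.limsup (fun r => μ (Metric.ball x r ∩ E) / μ (Metric.ball x r))
        (𝓝[>] (0 : ℝ)) ∧
       0 < Filter.limsup (fun r => μ (Metric.ball x r \ E) / μ (Metric.ball x r))
        (𝓝[>] (0 : ℝ))}


section Helpers
set_option linter.unusedSectionVars false
/-- Constant extension of the curve to the whole line. -/
def Curve.ext (γ : Curve X) (t : ℝ) : X := γ.toFun (projIcc 0 γ.len γ.len_nonneg t)

lemma Curve.ext_lip (γ : Curve X) : LipschitzWith 1 γ.ext := by
  have h1 : LipschitzWith 1 (fun t : ℝ => (projIcc 0 γ.len γ.len_nonneg t : ℝ)) := by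
    have := (LipschitzWith.subtype_val (Icc 0 γ.len)).comp (LipschitzWith.projIcc γ.len_nonneg)
    simpa [Function.comp_def] using this
  intro s t
  have := γ.lip (projIcc 0 γ.len γ.len_nonneg s).2 (projIcc 0 γ.len γ.len_nonneg t).2
  exact (this.trans (by simpa using h1 s t))

lemma Curve.ext_eq (γ : Curve X) {t : ℝ} (ht : t ∈ Icc 0 γ.len) : γ.ext t = γ.toFun t := by
  simp [Curve.ext, projIcc_of_mem γ.len_nonneg ht]

lemma Curve.ext_mem (γ : Curve X) {A : Set X} (h : γ.In A) (t : ℝ) : γ.ext t ∈ A :=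
  h _ (projIcc 0 γ.len γ.len_nonneg t).2

lemma Curve.integral_eq (γ : Curve X) (g : X → ℝ≥0∞) :
    γ.integral g = ∫⁻ t in Icc 0 γ.len, g (γ.ext t) := by
  refine setLIntegral_congr_fun measurableSet_Icc ?_
  intro t ht
  simp [γ.ext_eq ht]

lemma Curve.ext_zero (γ : Curve X) : γ.ext 0 = γ.toFun 0 := γ.ext_eq ⟨le_rfl, γ.len_nonneg⟩
lemma Curve.ext_len (γ : Curve X) : γ.ext γ.len = γ.toFun γ.len :=
  γ.ext_eq ⟨γ.len_nonneg, le_rfl⟩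

/-- Subcurve. -/
def Curve.sub (γ : Curve X) (a b : ℝ) (hab : a ≤ b) : Curve X where
  len := b - a
  len_nonneg := by linarith
  toFun t := γ.ext (a + t)
  lip := by
    have : LipschitzWith 1 (fun t : ℝ => a + t) := by
      apply LipschitzWith.of_dist_le_mul; intro x y; simp
    simpa [Function.comp_def] using (γ.ext_lip.comp this).lipschitzOnWith (s := Icc 0 (b - a))

lemma Curve.sub_in (γ : Curve X) {A : Set X} (h : γ.In A) (a b : ℝ) (hab : a ≤ b) :
    (γ.sub a b hab).In A := fun _ _ => γ.ext_mem h _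

lemma Curve.sub_integral (γ : Curve X) (a b : ℝ) (hab : a ≤ b) (g : X → ℝ≥0∞) :
    (γ.sub a b hab).integral g = ∫⁻ t in Icc a b, g (γ.ext t) := by
  have h := (measurePreserving_add_left (volume : Measure ℝ) a).setLIntegral_comp_preimage_emb
    (measurableEmbedding_addLeft a) (fun t => g (γ.ext t)) (Icc a b)
  rw [← h]
  simp [Curve.integral, Curve.sub]

lemma deriv_bound {f : ℝ → ℝ} {G : ℝ → ℝ≥0∞} {L : ℝ} (hL : 0 ≤ L) (hG : Measurable G)
    (hfin : ∫⁻ t in Icc 0 L, G t < ∞)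
    (hf : ∀ a b, 0 ≤ a → a ≤ b → b ≤ L → ENNReal.ofReal |f a - f b| ≤ ∫⁻ t in Icc a b, G t) :
    ∀ᵐ t ∂(volume.restrict (Icc 0 L)), ENNReal.ofReal |deriv f t| ≤ G t := by
  have hint : IntegrableOn (fun t => (G t).toReal) (Icc 0 L) :=
    integrable_toReal_of_lintegral_ne_top hG.aemeasurable hfin.ne
  have hii : IntervalIntegrable (fun t => (G t).toReal) volume 0 L :=
    (intervalIntegrable_iff_integrableOn_Icc_of_le hL).2 hint
  have h1 := hii.ae_hasDerivAt_integral
  have h2 : ∀ᵐ t ∂(volume.restrict (Icc 0 L)), G t < ∞ :=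
    ae_lt_top hG hfin.ne
  have h0 : ∀ᵐ t ∂(volume.restrict (Icc 0 L)), t ∈ Ioo 0 L := by
    rw [Measure.restrict_congr_set Ioo_ae_eq_Icc.symm]
    exact ae_restrict_mem measurableSet_Ioo
  rw [uIcc_of_le hL] at h1
  have key : ∀ a b, 0 ≤ a → a ≤ b → b ≤ L → |f b - f a| ≤ ∫ t in a..b, (G t).toReal := by
    intro a b ha hab hb
    have hsub : Icc a b ⊆ Icc 0 L := Icc_subset_Icc ha hb
    have h3 : ∫⁻ t in Icc a b, G t < ∞ := (lintegral_mono_set hsub).trans_lt hfin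
    rw [intervalIntegral.integral_of_le hab, ← integral_Icc_eq_integral_Ioc,
      integral_toReal hG.aemeasurable (ae_lt_top hG h3.ne)]
    rw [abs_sub_comm]
    exact (ENNReal.ofReal_le_iff_le_toReal h3.ne).1 (hf a b ha hab hb)
  filter_upwards [ae_restrict_of_ae h1, h2, h0] with t ht1 ht2 ht0
  by_cases hd : DifferentiableAt ℝ f t
  swap
  · simp [deriv_zero_of_not_differentiableAt hd]
  have htI : t ∈ Icc 0 L := ⟨ht0.1.le, ht0.2.le⟩
  have hF := ht1 htI 0 ⟨le_rfl, hL⟩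
  set F := fun x => ∫ t in (0:ℝ)..x, (G t).toReal with hFdef
  rw [ENNReal.ofReal_le_iff_le_toReal ht2.ne]
  have ev : ∀ᶠ y in 𝓝[>] t, |slope f t y| ≤ slope F t y := by
    have : Ioo t L ∈ 𝓝[>] t := Ioo_mem_nhdsGT ht0.2
    filter_upwards [this] with y hy
    have hk := key t y htI.1 hy.1.le hy.2.le
    have hFF : F y - F t = ∫ t in t..y, (G t).toReal := by
      rw [hFdef]; simp only
      rw [intervalIntegral.integral_interval_sub_left]
      · exact hii.mono_set (by rw [uIcc_of_le hL, uIcc_of_le (htI.1.trans hy.1.le)]; exact Icc_subset_Icc le_rfl hy.2.le)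
      · exact hii.mono_set (by rw [uIcc_of_le hL, uIcc_of_le htI.1]; exact Icc_subset_Icc le_rfl htI.2)
    rw [slope_def_field, slope_def_field, abs_div, abs_of_pos (sub_pos.2 hy.1), hFF]
    have : 0 < y - t := sub_pos.2 hy.1
    gcongr
  have l1 : Tendsto (fun y => |slope f t y|) (𝓝[>] t) (𝓝 |deriv f t|) :=
    ((hasDerivAt_iff_tendsto_slope.1 hd.hasDerivAt).mono_left
      (nhdsWithin_mono _ (fun y hy => ne_of_gt hy))).abs
  have l2 : Tendsto (fun y => slope F t y) (𝓝[>] t) (𝓝 (G t).toReal) :=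
    ((hasDerivAt_iff_tendsto_slope.1 hF).mono_left
      (nhdsWithin_mono _ (fun y hy => ne_of_gt hy)))
  exact le_of_tendsto_of_tendsto l1 l2 ev

lemma ftc_bound {f : ℝ → ℝ} {H : ℝ → ℝ≥0∞} {L : ℝ} (hL : 0 ≤ L) {K : ℝ≥0}
    (hf : LipschitzOnWith K f (Icc 0 L))
    (h : ∀ᵐ t ∂(volume.restrict (Icc 0 L)), ENNReal.ofReal |deriv f t| ≤ H t) :
    ENNReal.ofReal |f 0 - f L| ≤ ∫⁻ t in Icc 0 L, H t := by
  have hac : AbsolutelyContinuousOnInterval f 0 L := by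
    apply LipschitzOnWith.absolutelyContinuousOnInterval (K := K)
    rwa [uIcc_of_le hL]
  rw [abs_sub_comm, ← hac.integral_deriv_eq_sub, intervalIntegral.integral_of_le hL,
    ← integral_Icc_eq_integral_Ioc]
  calc ENNReal.ofReal |∫ t in Icc 0 L, deriv f t|
      = ‖∫ t in Icc 0 L, deriv f t‖ₑ := by
        rw [Real.enorm_eq_ofReal_abs]
    _ ≤ ∫⁻ t in Icc 0 L, ‖deriv f t‖ₑ := enorm_integral_le_lintegral_enorm _
    _ ≤ ∫⁻ t in Icc 0 L, H t := by
        apply lintegral_mono_ae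
        filter_upwards [h] with t ht
        rwa [Real.enorm_eq_ofReal_abs]

lemma LocLipOn.comp_curve {u : X → ℝ} {Ω : Set X} (hu : LocLipOn u Ω) {γ : Curve X}
    (hγ : γ.In Ω) : ∃ K, LipschitzOnWith K (u ∘ γ.ext) (Icc 0 γ.len) := by
  apply LocallyLipschitzOn.exists_lipschitzOnWith_of_compact isCompact_Icc
  intro t ht
  obtain ⟨r, hr, K, hK⟩ := hu _ (γ.ext_mem hγ t)
  refine ⟨K, γ.ext ⁻¹' ball (γ.ext t) r, ?_, ?_⟩
  · exact mem_nhdsWithin_of_mem_nhds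
      (γ.ext_lip.continuous.continuousAt.preimage_mem_nhds (ball_mem_nhds _ hr))
  · have := hK.comp (γ.ext_lip.lipschitzOnWith (s := γ.ext ⁻¹' ball (γ.ext t) r))
      (fun s hs => ⟨γ.ext_mem hγ s, hs⟩)
    simpa using this

lemma ugineq_of_deriv {u : X → ℝ} {Ω : Set X} (hu : LocLipOn u Ω) {γ : Curve X}
    (hγ : γ.In Ω) {h : X → ℝ≥0∞}
    (hd : ∀ᵐ t ∂(volume.restrict (Icc 0 γ.len)), ENNReal.ofReal |deriv (u ∘ γ.ext) t| ≤ h (γ.ext t)) :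
    UGIneq u h γ := by
  obtain ⟨K, hK⟩ := hu.comp_curve hγ
  have := ftc_bound γ.len_nonneg hK hd
  unfold UGIneq
  rw [γ.integral_eq]
  simpa [γ.ext_zero, γ.ext_len] using this

lemma deriv_of_ugineq {u : X → ℝ} {Ω : Set X} {γ : Curve X}
    (hγ : γ.In Ω) {g ρ : X → ℝ≥0∞} (hg : Measurable g)
    (hρ : ∀ γ : Curve X, γ.In Ω → ¬ UGIneq u g γ → γ.integral ρ = ∞)
    (h1 : γ.integral ρ < ∞) (h2 : γ.integral g < ∞) :
    ∀ᵐ t ∂(volume.restrict (Icc 0 γ.len)), ENNReal.ofReal |deriv (u ∘ γ.ext) t| ≤ g (γ.ext t) := by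
  apply deriv_bound γ.len_nonneg (hg.comp γ.ext_lip.continuous.measurable)
  · rwa [γ.integral_eq] at h2
  intro a b ha hab hb
  have hU : UGIneq u g (γ.sub a b hab) := by
    by_contra hcon
    have := hρ _ (γ.sub_in hγ a b hab) hcon
    rw [γ.sub_integral] at this
    rw [γ.integral_eq] at h1
    have h3 : ∫⁻ t in Icc a b, ρ (γ.ext t) ≤ ∫⁻ t in Icc 0 γ.len, ρ (γ.ext t) :=
      lintegral_mono_set (Icc_subset_Icc ha hb)
    rw [this] at h3
    exact absurd h1 (not_lt.2 h3)
  unfold UGIneq at hU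
  rw [γ.sub_integral] at hU
  simpa [Curve.sub] using hU


lemma exists_borel_ge {μ : Measure X} {g : X → ℝ≥0∞} (hg : AEMeasurable g μ) :
    ∃ g' : X → ℝ≥0∞, Measurable g' ∧ (∀ x, g x ≤ g' x) ∧ g' =ᵐ[μ] g := by
  classical
  have h0 : μ {x | g x ≠ hg.mk g x} = 0 := hg.ae_eq_mk
  refine ⟨(toMeasurable μ {x | g x ≠ hg.mk g x}).piecewise (fun _ => ∞) (hg.mk g), ?_, ?_, ?_⟩
  · exact Measurable.piecewise (measurableSet_toMeasurable _ _) measurable_const hg.measurable_mk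
  · intro x
    by_cases hx : x ∈ toMeasurable μ {x | g x ≠ hg.mk g x}
    · simp [hx]
    · rw [Set.piecewise_eq_of_notMem _ _ _ hx]
      have : x ∉ {x | g x ≠ hg.mk g x} := fun h => hx (subset_toMeasurable _ _ h)
      simp only [mem_setOf_eq, not_not] at this
      exact this.le
  · have h1 : ∀ᵐ x ∂μ, x ∉ toMeasurable μ {x | g x ≠ hg.mk g x} := by
      rw [← measure_toMeasurable] at h0
      exact measure_eq_zero_iff_ae_notMem.1 h0
    filter_upwards [h1, hg.ae_eq_mk] with x hx hx2
    rw [Set.piecewise_eq_of_notMem _ _ _ hx, hx2]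

lemma Curve.integral_mono (γ : Curve X) {g h : X → ℝ≥0∞} (hgh : ∀ x, g x ≤ h x) :
    γ.integral g ≤ γ.integral h := lintegral_mono fun _ => hgh _

lemma combine_rho {μ : Measure X} {ι : Type*} [Countable ι] (ρ : ι → X → ℝ≥0∞)
    (hm : ∀ i, Measurable (ρ i)) (hf : ∀ i, ∫⁻ x, ρ i x ∂μ < ∞) :
    ∃ σ : X → ℝ≥0∞, Measurable σ ∧ ∫⁻ x, σ x ∂μ < ∞ ∧
      ∀ γ : Curve X, γ.integral σ < ∞ → ∀ i, γ.integral (ρ i) < ∞ := by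
  obtain ⟨δ, hδ, hs⟩ := ENNReal.exists_pos_tsum_mul_lt_of_countable (ε := 1) one_ne_zero
    (fun i => ∫⁻ x, ρ i x ∂μ) (fun i => (hf i).ne)
  refine ⟨fun x => ∑' i, ρ i x * δ i, Measurable.tsum fun i => (hm i).mul_const _, ?_, ?_⟩
  · rw [lintegral_tsum fun i => ((hm i).mul_const _).aemeasurable]
    simp_rw [fun i => lintegral_mul_const (μ := μ) (δ i : ℝ≥0∞) (hm i)]
    exact hs.trans ENNReal.one_lt_top
  · intro γ hγ i
    have h1 : γ.integral (ρ i) * δ i ≤ γ.integral (fun x => ∑' i, ρ i x * δ i) := by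
      rw [γ.integral_eq, γ.integral_eq, ← lintegral_mul_const _
        (show Measurable (fun t => ρ i (γ.ext t)) from (hm i).comp γ.ext_lip.continuous.measurable)]
      exact lintegral_mono fun t => ENNReal.le_tsum (f := fun i => ρ i (γ.ext t) * δ i) i
    have h2 := h1.trans_lt hγ
    by_contra hcon
    rw [not_lt_top_iff.1 hcon, ENNReal.top_mul (by simpa using (hδ i).ne')] at h2
    exact lt_irrefl _ h2

/-- derivative bound along almost every curve -/
def DB (μ : Measure X) (u : X → ℝ) (Ω : Set X) (g : X → ℝ≥0∞) : Prop :=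
  Measurable g ∧ ∃ ρ : X → ℝ≥0∞, Measurable ρ ∧ ∫⁻ x, ρ x ∂μ < ∞ ∧
    ∀ γ : Curve X, γ.In Ω → γ.integral ρ < ∞ →
      ∀ᵐ t ∂(volume.restrict (Icc 0 γ.len)), ENNReal.ofReal |deriv (u ∘ γ.ext) t| ≤ g (γ.ext t)

lemma DB.wug {μ : Measure X} {u : X → ℝ} {Ω : Set X} {g : X → ℝ≥0∞} (hu : LocLipOn u Ω)
    (h : DB μ u Ω g) : IsWeakUpperGradientOn μ u g Ω := by
  obtain ⟨hg, ρ, hρ, hf, hh⟩ := h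
  refine ⟨hg.aemeasurable, ρ, hρ, hf, ?_⟩
  rintro γ ⟨h1, h2⟩
  by_contra hcon
  exact h2 (ugineq_of_deriv hu h1 (hh γ h1 (lt_top_iff_ne_top.2 hcon)))

lemma DB.iInf {μ : Measure X} {u : X → ℝ} {Ω : Set X} {ι : Type*} [Countable ι]
    {g : ι → X → ℝ≥0∞} (h : ∀ i, DB μ u Ω (g i)) : DB μ u Ω (fun x => ⨅ i, g i x) := by
  choose hg ρ hρ hf hh using h
  obtain ⟨σ, h1, h2, h3⟩ := combine_rho ρ hρ hf
  refine ⟨Measurable.iInf hg, σ, h1, h2, ?_⟩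
  intro γ hγ hγσ
  have := fun i => hh i γ hγ (h3 γ hγσ i)
  filter_upwards [ae_all_iff.2 this] with t ht
  exact le_iInf ht

lemma wug_DB [SecondCountableTopology X] {μ : Measure X} {u : X → ℝ} {Ω : Set X}
    {g' : X → ℝ≥0∞} (hΩ : IsOpen Ω)
    (h : IsWeakUpperGradientOn μ u g' Ω) (hloc : LIntegrableLocOn μ g' Ω) :
    ∃ g, DB μ u Ω g ∧ g =ᵐ[μ] g' := by
  obtain ⟨hg, ρ0, hρ0, hf0, hh0⟩ := h
  obtain ⟨g, hgm, hge, hgeq⟩ := exists_borel_ge hg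
  refine ⟨g, ?_, hgeq⟩
  choose! r hr hrf using hloc
  obtain ⟨s, hsΩ, hsc, hcov⟩ := TopologicalSpace.countable_cover_nhdsWithin
    (f := fun x => ball x (r x)) (s := Ω)
    (fun x hx => mem_nhdsWithin_of_mem_nhds (ball_mem_nhds x (hr x hx)))
  have : Countable s := hsc
  let ρ : Option s → X → ℝ≥0∞ := fun o => o.elim ρ0
    (fun x => (Ω ∩ ball (x : X) (r x)).indicator g)
  obtain ⟨σ, h1, h2, h3⟩ := combine_rho (μ := μ) ρ (by
    rintro (_ | x)
    · exact hρ0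
    · exact hgm.indicator (hΩ.measurableSet.inter measurableSet_ball)) (by
    rintro (_ | x)
    · exact hf0
    · simp only [ρ, Option.elim]
      rw [lintegral_indicator (hΩ.measurableSet.inter measurableSet_ball),
        lintegral_congr_ae (ae_restrict_of_ae hgeq)]
      exact hrf x (hsΩ x.2))
  refine ⟨hgm, σ, h1, h2, ?_⟩
  intro γ hγ hγσ
  refine deriv_of_ugineq hγ hgm (ρ := ρ0) ?_ (h3 γ hγσ none) ?_
  · intro γ' hγ' hn
    refine hh0 γ' ⟨hγ', fun hc => hn (le_trans hc (γ'.integral_mono hge))⟩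
  · rw [γ.integral_eq]
    have : ∫⁻ t in (Icc 0 γ.len) ∩ Icc 0 γ.len, g (γ.ext t) < ∞ := by
      refine isCompact_Icc.induction_on (p := fun S => ∫⁻ t in S ∩ Icc 0 γ.len, g (γ.ext t) < ∞)
        (by simp) ?_ ?_ ?_
      · intro S T hST hT
        exact (lintegral_mono_set (inter_subset_inter_left _ hST)).trans_lt hT
      · intro S T hS hT
        rw [union_inter_distrib_right]
        exact (lintegral_union_le _ _ _).trans_lt (ENNReal.add_lt_top.2 ⟨hS, hT⟩)
      · intro t ht
        obtain ⟨x, hxs, hx⟩ := mem_iUnion₂.1 (hcov (γ.ext_mem hγ t))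
        refine ⟨γ.ext ⁻¹' ball x (r x), mem_nhdsWithin_of_mem_nhds
          (γ.ext_lip.continuous.continuousAt.preimage_mem_nhds (isOpen_ball.mem_nhds hx)), ?_⟩
        have h4 := h3 γ hγσ (some ⟨x, hxs⟩)
        rw [γ.integral_eq] at h4
        refine lt_of_le_of_lt ?_ h4
        rw [← setLIntegral_indicator (isOpen_ball.preimage γ.ext_lip.continuous).measurableSet] 
        refine lintegral_mono fun y => ?_
        simp only [ρ, Option.elim]
        by_cases hy : y ∈ γ.ext ⁻¹' ball x (r x)
        · have hy2 : γ.ext y ∈ Ω ∩ ball x (r x) := ⟨γ.ext_mem hγ y, hy⟩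
          rw [indicator_of_mem hy, indicator_of_mem hy2]
        · simp [indicator_of_notMem hy]
    simpa using this

lemma exists_minimal [SecondCountableTopology X] {μ : Measure X} {u : X → ℝ} {Ω : Set X}
    (hΩ : IsOpen Ω) (hu : LocLipOn u Ω) {h : X → ℝ≥0∞}
    (hh : IsWeakUpperGradientOn μ u h Ω) (hfin : ∫⁻ x in Ω, h x ∂μ < ∞) :
    ∃ g, IsMinimalWUG μ u g Ω ∧ ∫⁻ x in Ω, g x ∂μ ≤ ∫⁻ x in Ω, h x ∂μ := by
  have hloc : LIntegrableLocOn μ h Ω := fun x _ => ⟨1, one_pos,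
    (lintegral_mono_set inter_subset_left).trans_lt hfin⟩
  obtain ⟨h', hDB, heq⟩ := wug_DB hΩ hh hloc
  have heq' : ∫⁻ x in Ω, h' x ∂μ = ∫⁻ x in Ω, h x ∂μ :=
    lintegral_congr_ae (ae_restrict_of_ae heq)
  let S : Set ℝ≥0∞ := (fun g => ∫⁻ x in Ω, g x ∂μ) '' {g | DB μ u Ω g}
  have hne : S.Nonempty := ⟨_, h', hDB, rfl⟩
  obtain ⟨a, ha1, ha2, ha3⟩ := exists_seq_tendsto_sInf hne (OrderBot.bddBelow S)
  choose G hG hGa using ha3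
  let g := fun x => ⨅ i, G i x
  have hg : DB μ u Ω g := DB.iInf hG
  have hle : ∫⁻ x in Ω, g x ∂μ ≤ sInf S := by
    refine ge_of_tendsto' ha2 fun n => ?_
    rw [← hGa n]
    exact lintegral_mono fun x => iInf_le _ n
  have hh' : ∫⁻ x in Ω, g x ∂μ ≤ ∫⁻ x in Ω, h x ∂μ := by
    rw [← heq']
    exact hle.trans (sInf_le ⟨h', hDB, rfl⟩)
  refine ⟨g, ⟨hg.wug hu, ?_⟩, hh'⟩
  intro g' hg' hl'
  obtain ⟨k, hk, hkeq⟩ := wug_DB hΩ hg' hl'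
  have hmin : DB μ u Ω (fun x => ⨅ b : Bool, (if b then g else k) x) :=
    DB.iInf fun b => by cases b <;> simp [hk, hg]
  have h5 : (fun x => ⨅ b : Bool, (if b then g else k) x) =ᵐ[μ.restrict Ω] g := by
    refine ae_eq_of_ae_le_of_lintegral_le (ae_of_all _ fun x => ?_) ?_ hg.1.aemeasurable ?_
    · exact iInf_le_of_le true (by simp)
    · refine ne_top_of_le_ne_top (hh'.trans_lt hfin).ne (lintegral_mono fun x => ?_)
      exact iInf_le_of_le true (by simp)
    · exact hle.trans (sInf_le ⟨_, hmin, rfl⟩)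
  filter_upwards [h5, ae_restrict_of_ae hkeq] with x hx hx2
  rw [← hx, ← hx2]
  exact iInf_le_of_le false (by simp)

lemma tvOpen_le [SecondCountableTopology X] {μ : Measure X} {u : X → ℝ} {Ω : Set X}
    (hΩ : IsOpen Ω) (z : ℕ → X → ℝ) (h : ℕ → X → ℝ≥0∞) (hz : ∀ n, LocLipOn (z n) Ω)
    (hh : ∀ n, IsWeakUpperGradientOn μ (z n) (h n) Ω) (hconv : L1LocConv μ Ω z u)
    {c : ℝ≥0∞} (hc : c < ∞) (hb : ∀ n, ∫⁻ x in Ω, h n x ∂μ ≤ c) : tvOpen μ Ω u ≤ c := by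
  choose g hg hgle using fun n => exists_minimal hΩ (hz n) (hh n) ((hb n).trans_lt hc)
  refine iInf_le_of_le z (iInf_le_of_le g (iInf_le_of_le hz (iInf_le_of_le hg
    (iInf_le_of_le hconv ?_))))
  refine liminf_le_of_le (by isBoundedDefault) fun b hb' => ?_
  obtain ⟨n, hn⟩ := hb'.exists
  exact hn.trans ((hgle n).trans (hb n))

/-- A good approximating sequence. -/
structure Approx (μ : Measure X) (Ω E : Set X) (c : ℝ≥0∞) (v : ℕ → X → ℝ)
    (g : ℕ → X → ℝ≥0∞) : Prop where
  lip : ∀ i, LocLipOn (v i) Ω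
  nonneg : ∀ i x, 0 ≤ v i x
  le_one : ∀ i x, v i x ≤ 1
  meas : ∀ i, Measurable (g i)
  ug : ∀ i (γ : Curve X), γ.In Ω → UGIneq (v i) (g i) γ
  conv : L1LocConv μ Ω v (Set.indicator E (fun _ => (1 : ℝ)))
  lt : ∀ i, ∫⁻ x in Ω, g i x ∂μ < c

lemma clamp_lip (a b : ℝ) : |max 0 (min 1 a) - max 0 (min 1 b)| ≤ |a - b| :=
  (abs_max_sub_max_le_max _ _ _ _).trans (by
    simp only [sub_self, abs_zero]
    refine max_le (abs_nonneg _) ((abs_min_sub_min_le_max _ _ _ _).trans ?_)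
    simp)

lemma exists_approx {μ : Measure X} {Ω E : Set X} {c : ℝ≥0∞}
    (h : perimOpen μ E Ω < c) : ∃ v g, Approx μ Ω E c v g := by
  unfold perimOpen tvOpen at h
  simp only [iInf_lt_iff] at h
  obtain ⟨v, g, hv, hg, hc, hl⟩ := h
  have hfr : ∃ᶠ i in atTop, ∫⁻ x in Ω, g i x ∂μ < c := frequently_lt_of_liminf_lt (by isBoundedDefault) hl
  obtain ⟨φ, hφ, hφc⟩ := extraction_of_frequently_atTop hfr
  have hw := fun i => (hg (φ i)).1
  have hex : ∀ i, ∃ k : X → ℝ≥0∞, Measurable k ∧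
      (∀ γ : Curve X, γ.In Ω → UGIneq (v (φ i)) k γ) ∧ ∫⁻ x in Ω, k x ∂μ < c := by
    intro i
    obtain ⟨hgm, ρ, hρ, hρf, hρb⟩ := hw i
    obtain ⟨k, hk, hkge, hkeq⟩ := exists_borel_ge hgm
    have hk' : ∫⁻ x in Ω, k x ∂μ < c := by
      rw [lintegral_congr_ae (ae_restrict_of_ae hkeq)]; exact hφc i
    obtain ⟨δ, hδ, hs⟩ := ENNReal.exists_pos_tsum_mul_lt_of_countable
      (ε := c - ∫⁻ x in Ω, k x ∂μ) (tsub_pos_of_lt hk').ne'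
      (fun _ : Unit => ∫⁻ x, ρ x ∂μ) (fun _ => hρf.ne)
    simp only [tsum_fintype, Finset.univ_unique, Finset.sum_singleton] at hs
    have hδ0 := hδ ()
    set d := δ () with hd
    refine ⟨fun x => k x + ρ x * d, hk.add (hρ.mul_const _), ?_, ?_⟩
    · intro γ hγ
      by_cases hU : UGIneq (v (φ i)) (g (φ i)) γ
      · exact le_trans hU (γ.integral_mono fun x => (hkge x).trans le_self_add)
      · have := hρb γ ⟨hγ, hU⟩
        have h2 : γ.integral ρ * d ≤ γ.integral (fun x => k x + ρ x * d) := by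
          rw [γ.integral_eq, γ.integral_eq, ← lintegral_mul_const _
            (show Measurable (fun t => ρ (γ.ext t)) from hρ.comp γ.ext_lip.continuous.measurable)]
          exact lintegral_mono fun t => le_add_self
        rw [this, ENNReal.top_mul (by simpa using hδ0.ne')] at h2
        exact le_trans le_top h2
    · rw [lintegral_add_left hk, lintegral_mul_const _ hρ]
      have h3 : (∫⁻ x in Ω, ρ x ∂μ) * d < c - ∫⁻ x in Ω, k x ∂μ :=
        lt_of_le_of_lt (by gcongr; exact Measure.restrict_le_self) hs
      rw [add_comm]
      exact lt_tsub_iff_right.1 h3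
  choose k hk hku hkc using hex
  refine ⟨fun i x => max 0 (min 1 (v (φ i) x)), k, ?_, ?_, ?_, hk, ?_, ?_, hkc⟩
  · intro i x hx
    obtain ⟨r, hr, K, hK⟩ := hv (φ i) x hx
    refine ⟨r, hr, K, ?_⟩
    apply LipschitzOnWith.of_dist_le_mul
    intro a ha b hb
    exact (clamp_lip _ _).trans (hK.dist_le_mul a ha b hb)
  · intro i x; exact le_max_left _ _
  · intro i x; exact max_le zero_le_one (min_le_left _ _)
  · intro i γ hγ
    exact le_trans (ENNReal.ofReal_le_ofReal (clamp_lip _ _)) (hku i γ hγ)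
  · intro x hx
    obtain ⟨r, hr, ht⟩ := hc x hx
    refine ⟨r, hr, ?_⟩
    have ht' := ht.comp hφ.tendsto_atTop
    refine tendsto_of_tendsto_of_tendsto_of_le_of_le tendsto_const_nhds ht' (fun _ => zero_le) ?_
    intro i
    refine lintegral_mono fun y => ENNReal.ofReal_le_ofReal ?_
    have : E.indicator (fun _ => (1:ℝ)) y = max 0 (min 1 (E.indicator (fun _ => (1:ℝ)) y)) := by
      by_cases hy : y ∈ E <;> simp [hy]
    have h6 := clamp_lip (v (φ i) y) (E.indicator (fun _ => (1:ℝ)) y)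
    rwa [← this] at h6


/-- Tent function. -/
def tent (c : X) (ρ : ℝ) (x : X) : ℝ := max 0 (min 1 (2 - dist x c / ρ))

lemma tent_nonneg (c : X) (ρ : ℝ) (x : X) : 0 ≤ tent c ρ x := le_max_left _ _
lemma tent_le_one (c : X) (ρ : ℝ) (x : X) : tent c ρ x ≤ 1 := max_le zero_le_one (min_le_left _ _)
lemma tent_one {c : X} {ρ : ℝ} (hρ : 0 < ρ) {x : X} (hx : x ∈ ball c ρ) : tent c ρ x = 1 := by
  have : dist x c / ρ ≤ 1 := (div_le_one hρ).2 (mem_ball.1 hx).le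
  unfold tent
  rw [min_eq_left (by linarith), max_eq_right zero_le_one]
lemma tent_zero {c : X} {ρ : ℝ} (hρ : 0 < ρ) {x : X} (hx : x ∉ ball c (2 * ρ)) :
    tent c ρ x = 0 := by
  have : 2 ≤ dist x c / ρ := (le_div_iff₀ hρ).2 (not_lt.1 hx)
  unfold tent
  exact max_eq_left ((min_le_right _ _).trans (by linarith))
lemma tent_lip (c : X) {ρ : ℝ} (hρ : 0 < ρ) : LipschitzWith (Real.toNNReal (1 / ρ)) (tent c ρ) := by
  apply LipschitzWith.of_dist_le_mul
  intro x y
  refine (clamp_lip _ _).trans ?_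
  rw [Real.coe_toNNReal _ (by positivity)]
  have : (2 - dist x c / ρ - (2 - dist y c / ρ)) = (1 / ρ) * (dist y c - dist x c) := by ring
  rw [this, abs_mul, abs_of_pos (by positivity : 0 < 1 / ρ)]
  gcongr
  rw [dist_comm x y]
  exact abs_dist_sub_le _ _ _

lemma tent_comp_lip (c : X) {ρ : ℝ} (hρ : 0 < ρ) (γ : Curve X) :
    LipschitzWith (Real.toNNReal (1 / ρ)) (tent c ρ ∘ γ.ext) := by
  simpa using (tent_lip c hρ).comp γ.ext_lip

lemma tent_deriv (c : X) {ρ : ℝ} (hρ : 0 < ρ) (γ : Curve X) (t : ℝ) :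
    ENNReal.ofReal |deriv (tent c ρ ∘ γ.ext) t| ≤
      (ball c (2 * ρ)).indicator (fun _ => ENNReal.ofReal (1 / ρ)) (γ.ext t) := by
  by_cases h : γ.ext t ∈ ball c (2 * ρ)
  · rw [indicator_of_mem h]
    apply ENNReal.ofReal_le_ofReal
    have := norm_deriv_le_of_lipschitz (x₀ := t) (tent_comp_lip c hρ γ)
    rwa [Real.coe_toNNReal _ (by positivity)] at this
  · have : IsLocalMin (tent c ρ ∘ γ.ext) t := by
      refine Eventually.of_forall fun s => ?_
      simp only [Function.comp, tent_zero hρ h]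
      exact tent_nonneg _ _ _
    simp [this.deriv_eq_zero]

lemma LipschitzWith.locLipOn {u : X → ℝ} {K : ℝ≥0} (hu : LipschitzWith K u) (A : Set X) :
    LocLipOn u A := fun _ _ => ⟨1, one_pos, K, hu.lipschitzOnWith⟩

lemma tent_ug (c : X) {ρ : ℝ} (hρ : 0 < ρ) (γ : Curve X) :
    UGIneq (tent c ρ) ((ball c (2 * ρ)).indicator (fun _ => ENNReal.ofReal (1 / ρ))) γ :=
  ugineq_of_deriv (Ω := univ) (LipschitzWith.locLipOn (tent_lip c hρ) _) (fun _ _ => trivial)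
    (ae_of_all _ fun t => tent_deriv c hρ γ t)

lemma capa_le {μ : Measure X} {ι : Type*} [Countable ι] (c : ι → X) (ρ : ι → ℝ)
    (hρ : ∀ i, 0 < ρ i) {G : Set X} (hG : G ⊆ ⋃ i, ball (c i) (ρ i)) :
    capa1 μ G ≤ ∑' i, μ (ball (c i) (2 * ρ i)) * (1 + ENNReal.ofReal (1 / ρ i)) := by
  by_cases hfin : ∑' i, μ (ball (c i) (2 * ρ i)) * (1 + ENNReal.ofReal (1 / ρ i)) = ∞
  · rw [hfin]; exact le_top
  set u : X → ℝ := fun x => ⨆ i, tent (c i) (ρ i) x with hu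
  have hbdd : ∀ x, BddAbove (range fun i => tent (c i) (ρ i) x) := fun x =>
    ⟨1, by rintro _ ⟨i, rfl⟩; exact tent_le_one _ _ _⟩
  have hu0 : ∀ x, 0 ≤ u x := fun x => Real.iSup_nonneg fun i => tent_nonneg _ _ _
  set f : ι → X → ℝ≥0∞ := fun i =>
    (ball (c i) (2 * ρ i)).indicator (fun _ => ENNReal.ofReal (1 / ρ i)) with hf
  set g : X → ℝ≥0∞ := fun x => ∑' i, f i x with hg
  have hfm : ∀ i, Measurable (f i) := fun i => measurable_const.indicator measurableSet_ball
  have hgm : Measurable g := Measurable.tsum hfm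
  have hug : ∀ γ : Curve X, UGIneq u g γ := by
    intro γ
    unfold UGIneq
    by_cases hγ : γ.integral g = ∞
    · rw [hγ]; exact le_top
    rw [ENNReal.ofReal_le_iff_le_toReal hγ]
    set D := (γ.integral g).toReal
    have hD : 0 ≤ D := ENNReal.toReal_nonneg
    have hi : ∀ i, |tent (c i) (ρ i) (γ.toFun 0) - tent (c i) (ρ i) (γ.toFun γ.len)| ≤ D := by
      intro i
      rw [← ENNReal.ofReal_le_iff_le_toReal hγ]
      exact (tent_ug (c i) (hρ i) γ).trans (γ.integral_mono fun x => ENNReal.le_tsum (f := fun i => f i x) i)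
    have key : ∀ x y, (∀ i, |tent (c i) (ρ i) x - tent (c i) (ρ i) y| ≤ D) → u x ≤ u y + D := by
      intro x y h
      refine Real.iSup_le (fun i => ?_) (add_nonneg (hu0 y) hD)
      have h1 := (abs_le.1 (h i)).2
      have h2 : tent (c i) (ρ i) y ≤ u y := le_ciSup (hbdd y) i
      linarith
    rw [abs_le]
    have h1 := key _ _ hi
    have h2 := key _ _ (fun i => by rw [abs_sub_comm]; exact hi i)
    constructor <;> linarith
  have hwug : IsWeakUpperGradientOn μ u g univ :=
    ⟨hgm.aemeasurable, 0, measurable_const, by simp, fun γ h => absurd (hug γ) h.2⟩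
  have hN : NNorm μ univ u ≤ ∑' i, μ (ball (c i) (2 * ρ i)) * (1 + ENNReal.ofReal (1 / ρ i)) := by
    unfold NNorm
    have e : ∑' i, μ (ball (c i) (2 * ρ i)) * (1 + ENNReal.ofReal (1 / ρ i))
        = (∑' i, μ (ball (c i) (2 * ρ i)))
          + ∑' i, μ (ball (c i) (2 * ρ i)) * ENNReal.ofReal (1 / ρ i) := by
      rw [← ENNReal.tsum_add]; congr 1; ext i; ring
    rw [e]
    refine add_le_add ?_ (iInf₂_le_of_le g hwug ?_)
    · calc ∫⁻ x in univ, ENNReal.ofReal |u x| ∂μ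
          ≤ ∫⁻ x, ∑' i, (ball (c i) (2 * ρ i)).indicator 1 x ∂μ := by
            rw [Measure.restrict_univ]
            refine lintegral_mono fun x => ?_
            rw [abs_of_nonneg (hu0 x)]
            by_cases hx : ∃ i, x ∈ ball (c i) (2 * ρ i)
            · obtain ⟨i, hi⟩ := hx
              calc ENNReal.ofReal (u x) ≤ 1 := by
                    rw [ENNReal.ofReal_le_one]
                    exact Real.iSup_le (fun i => tent_le_one _ _ _) zero_le_one
                _ = (ball (c i) (2 * ρ i)).indicator 1 x := by simp [indicator_of_mem hi]
                _ ≤ _ := ENNReal.le_tsum (f := fun i => (ball (c i) (2 * ρ i)).indicator (1 : X → ℝ≥0∞) x) i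
            · push Not at hx
              have : u x ≤ 0 := Real.iSup_le (fun i => (tent_zero (hρ i) (hx i)).le) le_rfl
              rw [ENNReal.ofReal_of_nonpos this]; exact zero_le
        _ = _ := by
            rw [lintegral_tsum fun i => (measurable_one.indicator measurableSet_ball).aemeasurable]
            congr 1; ext i
            rw [lintegral_indicator_one measurableSet_ball]
    · rw [Measure.restrict_univ, hg, lintegral_tsum fun i => (hfm i).aemeasurable]
      refine ENNReal.tsum_le_tsum fun i => ?_
      rw [hf, lintegral_indicator_const measurableSet_ball, mul_comm]
  refine iInf_le_of_le u (iInf_le_of_le (hN.trans_lt (lt_top_iff_ne_top.2 hfin)) (iInf_le_of_le ?_ hN))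
  intro x hx
  obtain ⟨i, hi⟩ := mem_iUnion.1 (hG hx)
  rw [← tent_one (hρ i) hi]
  exact le_ciSup (hbdd x) i

lemma LocLipOn.continuousOn {u : X → ℝ} {Ω : Set X} (hΩ : IsOpen Ω) (hu : LocLipOn u Ω) :
    ContinuousOn u Ω := by
  intro x hx
  obtain ⟨r, hr, K, hK⟩ := hu x hx
  exact ((hK.continuousOn x ⟨hx, mem_ball_self hr⟩).continuousAt
    ((hΩ.inter isOpen_ball).mem_nhds ⟨hx, mem_ball_self hr⟩)).continuousWithinAt

lemma LocLipOn.measurable_indicator {u : X → ℝ} {Ω : Set X} (hΩ : IsOpen Ω) (hu : LocLipOn u Ω) :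
    Measurable (Ω.indicator u) := by
  classical
  rw [← Set.piecewise_eq_indicator]
  exact (hu.continuousOn hΩ).measurable_piecewise continuousOn_const hΩ.measurableSet

/-- Sum of tents. -/
def tents {ι : Type*} (s : Finset ι) (c : ι → X) (ρ : ι → ℝ) (x : X) : ℝ :=
  ∑ i ∈ s, tent (c i) (ρ i) x

lemma tents_nonneg {ι : Type*} (s : Finset ι) (c : ι → X) (ρ : ι → ℝ) (x : X) :
    0 ≤ tents s c ρ x := Finset.sum_nonneg fun _ _ => tent_nonneg _ _ _

lemma tents_eq {ι : Type*} {s : Finset ι} {c : ι → X} {ρ : ι → ℝ} (hρ : ∀ i ∈ s, 0 < ρ i)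
    (hd : (s : Set ι).PairwiseDisjoint fun i => ball (c i) (2 * ρ i)) {x : X} {i : ι} (hi : i ∈ s)
    (hx : x ∈ ball (c i) (2 * ρ i)) : tents s c ρ x = tent (c i) (ρ i) x := by
  refine Finset.sum_eq_single_of_mem i hi fun j hj hji => ?_
  exact tent_zero (hρ j hj) fun hxj => (disjoint_left.1 (hd hj hi hji)) hxj hx

lemma tents_le_one {ι : Type*} {s : Finset ι} {c : ι → X} {ρ : ι → ℝ} (hρ : ∀ i ∈ s, 0 < ρ i)
    (hd : (s : Set ι).PairwiseDisjoint fun i => ball (c i) (2 * ρ i)) (x : X) :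
    tents s c ρ x ≤ 1 := by
  by_cases h : ∃ i ∈ s, x ∈ ball (c i) (2 * ρ i)
  · obtain ⟨i, hi, hx⟩ := h
    rw [tents_eq hρ hd hi hx]; exact tent_le_one _ _ _
  · push Not at h
    have : tents s c ρ x = 0 := Finset.sum_eq_zero fun i hi => tent_zero (hρ i hi) (h i hi)
    rw [this]; exact zero_le_one

lemma tents_lip {ι : Type*} {s : Finset ι} {c : ι → X} {ρ : ι → ℝ} (hρ : ∀ i ∈ s, 0 < ρ i) :
    LipschitzWith (∑ i ∈ s, Real.toNNReal (1 / ρ i)) (tents s c ρ) := by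
  apply LipschitzWith.of_dist_le_mul
  intro x y
  unfold tents
  rw [NNReal.coe_sum, Finset.sum_mul]
  refine (dist_sum_sum_le _ _ _).trans (Finset.sum_le_sum fun i hi => ?_)
  exact (tent_lip (c i) (hρ i hi)).dist_le_mul x y

lemma competitor {μ : Measure X} {Ω : Set X} (hΩ : IsOpen Ω) {v : X → ℝ} {g : X → ℝ≥0∞}
    (hv : LocLipOn v Ω) (hv0 : ∀ x, 0 ≤ v x) (hv1 : ∀ x, v x ≤ 1) (hg : Measurable g)
    (hug : ∀ γ : Curve X, γ.In Ω → UGIneq v g γ) (hfin : ∫⁻ x in Ω, g x ∂μ < ∞)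
    {ι : Type*} {s : Finset ι} {c : ι → X} {ρ : ι → ℝ} (hρ : ∀ i ∈ s, 0 < ρ i)
    (hd : (s : Set ι).PairwiseDisjoint fun i => ball (c i) (2 * ρ i)) :
    LocLipOn (fun x => v x * (1 - tents s c ρ x)) Ω ∧
    ∃ h, IsWeakUpperGradientOn μ (fun x => v x * (1 - tents s c ρ x)) h Ω ∧
      ∫⁻ x in Ω, h x ∂μ ≤ ∫⁻ x in Ω \ ⋃ i ∈ s, ball (c i) (ρ i), g x ∂μ +
        ∑ i ∈ s, ENNReal.ofReal (1 / ρ i) *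
          ∫⁻ x in Ω ∩ ball (c i) (2 * ρ i), ENNReal.ofReal (v x) ∂μ := by
  have hw : LocLipOn (fun x => v x * (1 - tents s c ρ x)) Ω := by
    intro x hx
    obtain ⟨r, hr, K, hK⟩ := hv x hx
    refine ⟨r, hr, K + ∑ i ∈ s, Real.toNNReal (1 / ρ i), ?_⟩
    apply LipschitzOnWith.of_dist_le_mul
    intro a ha b hb
    have h1 := hK.dist_le_mul a ha b hb
    have h2 := (tents_lip (c := c) hρ).dist_le_mul a b
    rw [Real.dist_eq] at *
    rw [NNReal.coe_add, add_mul]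
    have e : v a * (1 - tents s c ρ a) - v b * (1 - tents s c ρ b)
      = (v a - v b) * (1 - tents s c ρ a) - v b * (tents s c ρ a - tents s c ρ b) := by ring
    rw [e]
    refine (abs_sub _ _).trans (add_le_add ?_ ?_)
    · rw [abs_mul]
      refine le_trans ?_ h1
      refine mul_le_of_le_one_right (abs_nonneg _) ?_
      have := tents_nonneg s c ρ a
      have := tents_le_one hρ hd a
      rw [abs_le]; constructor <;> linarith
    · rw [abs_mul]
      refine le_trans ?_ h2
      refine mul_le_of_le_one_left (abs_nonneg _) ?_
      rw [abs_of_nonneg (hv0 b)]; exact hv1 b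
  refine ⟨hw, ?_⟩
  set A : Set X := ⋃ i ∈ s, ball (c i) (ρ i) with hA
  have hAm : MeasurableSet A := (isOpen_biUnion fun i _ => isOpen_ball).measurableSet
  set V : X → ℝ≥0∞ := fun x => ENNReal.ofReal (Ω.indicator v x) with hV
  have hVm : Measurable V := (hv.measurable_indicator hΩ).ennreal_ofReal
  set F : ι → X → ℝ≥0∞ := fun i =>
    (ball (c i) (2 * ρ i)).indicator (fun x => ENNReal.ofReal (1 / ρ i) * V x) with hF
  have hFm : ∀ i, Measurable (F i) := fun i => (hVm.const_mul _).indicator measurableSet_ball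
  set h : X → ℝ≥0∞ := fun x => Aᶜ.indicator g x + ∑ i ∈ s, F i x with hh
  have hgA : Measurable (Aᶜ.indicator g) := hg.indicator hAm.compl
  have hhm : Measurable h := hgA.add (Finset.measurable_fun_sum _ fun i _ => hFm i)
  refine ⟨h, ?_, ?_⟩
  · apply DB.wug hw
    refine ⟨hhm, Ω.indicator g, hg.indicator hΩ.measurableSet, ?_, ?_⟩
    · rwa [lintegral_indicator hΩ.measurableSet]
    intro γ hγ hγf
    have hγg : γ.integral g < ∞ := by
      rw [γ.integral_eq] at hγf ⊢
      refine lt_of_le_of_lt (le_of_eq ?_) hγf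
      congr 1; ext t; rw [indicator_of_mem (γ.ext_mem hγ t)]
    have hd1 := deriv_of_ugineq (ρ := 0) hγ hg (fun γ' h1 h2 => absurd (hug γ' h1) h2)
      (by simp [Curve.integral]) hγg
    obtain ⟨K, hK⟩ := hv.comp_curve hγ
    have hd2 : ∀ᵐ t ∂(volume.restrict (Icc 0 γ.len)), DifferentiableAt ℝ (v ∘ γ.ext) t := by
      have hac : AbsolutelyContinuousOnInterval (v ∘ γ.ext) 0 γ.len := by
        apply LipschitzOnWith.absolutelyContinuousOnInterval (K := K)
        rwa [uIcc_of_le γ.len_nonneg]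
      have := hac.ae_differentiableAt
      rw [uIcc_of_le γ.len_nonneg] at this
      exact (ae_restrict_iff' measurableSet_Icc).2 this
    have hd3 : ∀ᵐ t ∂(volume.restrict (Icc 0 γ.len)), ∀ i ∈ s,
        DifferentiableAt ℝ (tent (c i) (ρ i) ∘ γ.ext) t := by
      refine ae_restrict_of_ae ((ae_ball_iff s.countable_toSet).2 fun i hi => ?_)
      exact (tent_comp_lip (c i) (hρ i hi) γ).ae_differentiableAt_real
    filter_upwards [hd1, hd2, hd3] with t h1 h2 h3
    have hder : HasDerivAt ((fun x => v x * (1 - tents s c ρ x)) ∘ γ.ext)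
        (deriv (v ∘ γ.ext) t * (1 - tents s c ρ (γ.ext t)) + v (γ.ext t) *
          (0 - ∑ i ∈ s, deriv (tent (c i) (ρ i) ∘ γ.ext) t)) t := by
      have hs : HasDerivAt (fun t => ∑ i ∈ s, (tent (c i) (ρ i) ∘ γ.ext) t)
          (∑ i ∈ s, deriv (tent (c i) (ρ i) ∘ γ.ext) t) t :=
        HasDerivAt.fun_sum fun i hi => (h3 i hi).hasDerivAt
      exact h2.hasDerivAt.mul ((hasDerivAt_const t (1:ℝ)).sub hs)
    rw [hder.deriv]
    have hS : ENNReal.ofReal (v (γ.ext t) * |∑ i ∈ s, deriv (tent (c i) (ρ i) ∘ γ.ext) t|)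
        ≤ ∑ i ∈ s, F i (γ.ext t) := by
      calc _ ≤ ENNReal.ofReal (∑ i ∈ s, v (γ.ext t) * |deriv (tent (c i) (ρ i) ∘ γ.ext) t|) := by
            apply ENNReal.ofReal_le_ofReal
            rw [← Finset.mul_sum]
            exact mul_le_mul_of_nonneg_left (Finset.abs_sum_le_sum_abs _ _) (hv0 _)
        _ = ∑ i ∈ s, ENNReal.ofReal (v (γ.ext t) * |deriv (tent (c i) (ρ i) ∘ γ.ext) t|) :=
            ENNReal.ofReal_sum_of_nonneg fun i _ => mul_nonneg (hv0 _) (abs_nonneg _)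
        _ ≤ _ := by
            refine Finset.sum_le_sum fun i hi => ?_
            rw [ENNReal.ofReal_mul (hv0 _)]
            have ht := tent_deriv (c i) (hρ i hi) γ t
            have hVv : V (γ.ext t) = ENNReal.ofReal (v (γ.ext t)) := by
              simp only [hV]; rw [indicator_of_mem (γ.ext_mem hγ t)]
            simp only [hF]
            by_cases hb : γ.ext t ∈ ball (c i) (2 * ρ i)
            · rw [indicator_of_mem hb] at ht ⊢
              rw [hVv, mul_comm]; gcongr
            · rw [indicator_of_notMem hb] at ht ⊢
              simp [le_zero_iff.1 ht]
    by_cases hAt : γ.ext t ∈ A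
    · have h1' : tents s c ρ (γ.ext t) = 1 := by
        obtain ⟨i, hi, hx⟩ := mem_iUnion₂.1 hAt
        have hp := hρ i hi
        rw [tents_eq hρ hd hi (ball_subset_ball (by linarith) hx), tent_one hp hx]
      rw [h1']
      simp only [sub_self, mul_zero, zero_add, zero_sub, mul_neg, abs_neg, abs_mul,
        abs_of_nonneg (hv0 _)]
      exact hS.trans le_add_self
    · simp only [hh]
      rw [indicator_of_mem (show γ.ext t ∈ Aᶜ from hAt)]
      refine le_trans (ENNReal.ofReal_le_ofReal (abs_add_le _ _)) ?_
      refine ENNReal.ofReal_add_le.trans (add_le_add ?_ ?_)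
      · refine le_trans (ENNReal.ofReal_le_ofReal ?_) h1
        rw [abs_mul]
        refine mul_le_of_le_one_right (abs_nonneg _) ?_
        have := tents_nonneg s c ρ (γ.ext t)
        have := tents_le_one hρ hd (γ.ext t)
        rw [abs_le]; constructor <;> linarith
      · simpa [abs_mul, abs_of_nonneg (hv0 _)] using hS
  · rw [hh, lintegral_add_left hgA, lintegral_finsetSum _ fun i _ => hFm i]
    refine add_le_add (le_of_eq ?_) (Finset.sum_le_sum fun i hi => le_of_eq ?_)
    · rw [setLIntegral_indicator hAm.compl, inter_comm]; rfl
    · simp only [hF]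
      rw [setLIntegral_indicator measurableSet_ball, lintegral_const_mul _ hVm, inter_comm]
      congr 1
      refine setLIntegral_congr_fun (hΩ.measurableSet.inter measurableSet_ball) fun x hx => ?_
      simp only [hV]; rw [indicator_of_mem hx.1]


lemma Doubling.fin {μ : Measure X} {Cd : ℝ} (h : Doubling μ Cd) (x : X) (r : ℝ) :
    μ (ball x r) < ∞ := by
  rcases le_or_gt r 0 with hr | hr
  · simp [ball_eq_empty.2 hr]
  · exact (h.2 x r hr).2.2

lemma Doubling.pos {μ : Measure X} {Cd : ℝ} (h : Doubling μ Cd) (x : X) {r : ℝ} (hr : 0 < r) :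
    0 < μ (ball x r) := by
  have := (h.2 x (r / 2) (by positivity)).1
  rwa [mul_div_cancel₀ _ (two_ne_zero)] at this

lemma Doubling.scale {μ : Measure X} {Cd : ℝ} (h : Doubling μ Cd) (K : ℝ) :
    ∃ C : ℝ≥0, 1 ≤ C ∧ ∀ (x : X) (r : ℝ), 0 < r → μ (ball x (K * r)) ≤ C * μ (ball x r) := by
  have h2 : ∀ n : ℕ, ∀ (x : X) (r : ℝ), 0 < r →
      μ (ball x (2 ^ n * r)) ≤ ((Real.toNNReal Cd ^ n : ℝ≥0) : ℝ≥0∞) * μ (ball x r) := by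
    intro n
    induction n with
    | zero => intro x r hr; simp
    | succ n ih =>
      intro x r hr
      have h1 := (h.2 x (2 ^ n * r) (by positivity)).2.1
      rw [← mul_assoc, ← pow_succ'] at h1
      refine h1.trans ?_
      rw [pow_succ', ENNReal.coe_mul, mul_assoc]
      gcongr
      · exact le_rfl
      · exact ih x r hr
  obtain ⟨n, hn⟩ := pow_unbounded_of_one_lt K (one_lt_two)
  refine ⟨Real.toNNReal Cd ^ n, one_le_pow₀ (by simpa using h.1), fun x r hr => ?_⟩
  exact (measure_mono (ball_subset_ball (by gcongr))).trans (h2 n x r hr)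

lemma Doubling.proper [CompleteSpace X] {μ : Measure X} {Cd : ℝ} (h : Doubling μ Cd) :
    ProperSpace X := by
  refine ⟨fun x r => ?_⟩
  rcases lt_or_ge r 0 with hr | hr
  · rw [closedBall_eq_empty.2 hr]; exact isCompact_empty
  refine TotallyBounded.isCompact_of_isClosed ?_ isClosed_closedBall
  rw [Metric.totallyBounded_iff]
  intro ε hε
  by_contra hcon
  push Not at hcon
  have hstep : ∀ s : Finset X, (∀ y ∈ s, y ∈ closedBall x r) → ∃ y, y ∈ closedBall x r ∧
      ∀ z ∈ s, ε ≤ dist z y := by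
    intro s hs
    have := hcon s s.finite_toSet
    obtain ⟨y, hy, hy2⟩ := not_subset.1 this
    refine ⟨y, hy, fun z hz => ?_⟩
    by_contra hlt
    push Not at hlt
    exact hy2 (mem_biUnion hz (by rw [mem_ball, dist_comm]; exact hlt))
  obtain ⟨f, hf1, hf2⟩ := exists_seq_of_forall_finset_exists (fun y => y ∈ closedBall x r)
    (fun z y => ε ≤ dist z y) hstep
  have hdist : ∀ m n, m ≠ n → ε ≤ dist (f m) (f n) := by
    intro m n hmn
    rcases lt_or_gt_of_ne hmn with hlt | hlt
    · exact hf2 m n hlt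
    · rw [dist_comm]; exact hf2 n m hlt
  obtain ⟨C, hC1, hC⟩ := h.scale ((2 * r + ε) / (ε / 2))
  have hC0 : (C : ℝ≥0∞) ≠ 0 := by
    have : C ≠ 0 := (lt_of_lt_of_le one_pos hC1).ne'
    exact_mod_cast this
  have hlow' : ∀ n, μ (ball x (ε/2)) / C ≤ μ (ball (f n) (ε / 2)) := by
    intro n
    rw [ENNReal.div_le_iff hC0 ENNReal.coe_ne_top, mul_comm]
    refine (measure_mono ?_).trans (hC (f n) (ε / 2) (by positivity))
    rw [div_mul_cancel₀ _ (by positivity)]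
    refine ball_subset_ball' ?_
    have := mem_closedBall.1 (hf1 n)
    rw [dist_comm] at this
    linarith
  have hpos : 0 < μ (ball x (ε/2)) / C := ENNReal.div_pos (h.pos x (by positivity)).ne' ENNReal.coe_ne_top
  have hfin := Measure.finite_const_le_meas_of_disjoint_iUnion μ (As := fun n => ball (f n) (ε/2)) hpos
    (fun n => measurableSet_ball) (fun m n hmn => ball_disjoint_ball (by
      have := hdist m n hmn; linarith)) (ne_top_of_le_ne_top (h.fin x (r + ε)).ne (measure_mono (by
        refine iUnion_subset fun n => ball_subset_ball' ?_
        have := mem_closedBall.1 (hf1 n)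
        linarith)))
  have : {i | μ (ball x (ε/2)) / C ≤ μ (ball (f i) (ε / 2))} = univ := eq_univ_of_forall hlow'
  rw [this] at hfin
  exact infinite_univ hfin

lemma Doubling.unif {μ : Measure X} {Cd : ℝ} (h : Doubling μ Cd) :
    IsUnifLocDoublingMeasure μ := by
  obtain ⟨C, hC1, hC⟩ := h.scale 4
  refine ⟨C, ?_⟩
  filter_upwards [self_mem_nhdsWithin] with ε hε x
  have hε : 0 < ε := hε
  exact (measure_mono (closedBall_subset_ball (by linarith))).trans
    ((hC x ε hε).trans (by gcongr; exact ball_subset_closedBall))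

lemma Doubling.locfin {μ : Measure X} {Cd : ℝ} (h : Doubling μ Cd) :
    IsLocallyFiniteMeasure μ :=
  ⟨fun x => ⟨ball x 1, ball_mem_nhds x one_pos, h.fin x 1⟩⟩

lemma L1LocConv.compact {μ : Measure X} {Ω : Set X} {v : ℕ → X → ℝ} {u : X → ℝ}
    (h : L1LocConv μ Ω v u) {K : Set X} (hK : IsCompact K) (hKΩ : K ⊆ Ω) :
    Tendsto (fun i => ∫⁻ y in K, ENNReal.ofReal |v i y - u y| ∂μ) atTop (𝓝 0) := by
  have hmono : ∀ {s t : Set X}, s ⊆ t → Tendsto (fun i => ∫⁻ y in t, ENNReal.ofReal |v i y - u y| ∂μ) atTop (𝓝 0) →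
      Tendsto (fun i => ∫⁻ y in s, ENNReal.ofReal |v i y - u y| ∂μ) atTop (𝓝 0) := fun hst ht =>
    tendsto_of_tendsto_of_tendsto_of_le_of_le tendsto_const_nhds ht (fun _ => by positivity)
      (fun i => lintegral_mono_set hst)
  refine hK.induction_on (p := fun s => Tendsto (fun i => ∫⁻ y in s, ENNReal.ofReal |v i y - u y| ∂μ) atTop (𝓝 0)) ?_ ?_ ?_ ?_
  · simp
  · intro s t hst ht; exact hmono hst ht
  · intro s t hs ht
    have := hs.add ht
    rw [add_zero] at this
    exact tendsto_of_tendsto_of_tendsto_of_le_of_le tendsto_const_nhds this (fun _ => by positivity)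
      (fun i => lintegral_union_le _ _ _)
  · intro x hx
    obtain ⟨r, hr, hc⟩ := h x (hKΩ hx)
    exact ⟨K ∩ ball x r, inter_mem_nhdsWithin K (ball_mem_nhds x hr),
      hmono (inter_subset_inter_left _ hKΩ) hc⟩


lemma poinc_ug {μ : Measure X} {Ω E : Set X} {c : ℝ≥0∞} {v : ℕ → X → ℝ}
    {g : ℕ → X → ℝ≥0∞} (hA : Approx μ Ω E c v g) {K : Set X} (hK : IsClosed K) (hKΩ : K ⊆ Ω) (i : ℕ) :
    IsUpperGradient (Ω.indicator (v i)) (fun y => K.indicator (g i) y + Kᶜ.indicator (fun _ => ∞) y) := by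
  refine ⟨((hA.meas i).indicator hK.measurableSet).add (measurable_const.indicator hK.measurableSet.compl), fun γ => ?_⟩
  by_cases hγ : γ.In Ω
  · have h1 := hA.ug i γ hγ
    unfold UGIneq at h1 ⊢
    rw [indicator_of_mem (hγ 0 ⟨le_rfl, γ.len_nonneg⟩), indicator_of_mem (hγ γ.len ⟨γ.len_nonneg, le_rfl⟩)]
    refine h1.trans (γ.integral_mono fun x => ?_)
    by_cases hx : x ∈ K <;> simp [hx]
  · rcases eq_or_lt_of_le γ.len_nonneg with h0 | h0
    · unfold UGIneq; rw [← h0]; simp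
    suffices γ.integral (fun y => K.indicator (g i) y + Kᶜ.indicator (fun _ => ∞) y) = ∞ by
      unfold UGIneq; rw [this]; exact le_top
    unfold Curve.In at hγ
    push Not at hγ
    obtain ⟨t, ht, htΩ⟩ := hγ
    have htK : γ.toFun t ∈ Kᶜ := fun h => htΩ (hKΩ h)
    have hcont := γ.lip.continuousOn
    have hnh : γ.toFun ⁻¹' Kᶜ ∈ 𝓝[Icc 0 γ.len] t := (hcont t ht) (hK.isOpen_compl.mem_nhds htK)
    obtain ⟨δ, hδ, hsub⟩ := Metric.mem_nhdsWithin_iff.1 hnh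
    have hpos : 0 < volume (ball t δ ∩ Icc 0 γ.len) := by
      rw [Real.ball_eq_Ioo]
      have : Ioo (max 0 (t-δ)) (min γ.len (t+δ)) ⊆ Ioo (t - δ) (t + δ) ∩ Icc 0 γ.len := by
        intro y hy
        simp only [mem_Ioo, max_lt_iff, lt_min_iff] at hy
        exact ⟨⟨hy.1.2, hy.2.2⟩, hy.1.1.le, hy.2.1.le⟩
      refine lt_of_lt_of_le ?_ (measure_mono this)
      rw [Real.volume_Ioo, ENNReal.ofReal_pos, sub_pos]
      simp only [max_lt_iff, lt_min_iff]
      obtain ⟨h1, h2⟩ := ht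
      refine ⟨⟨h0, by linarith⟩, by linarith, by linarith⟩
    unfold Curve.integral
    rw [eq_top_iff]
    calc ∞ = ∞ * volume (ball t δ ∩ Icc 0 γ.len) := (ENNReal.top_mul hpos.ne').symm
      _ = ∫⁻ _ in ball t δ ∩ Icc 0 γ.len, ∞ := by rw [lintegral_const, Measure.restrict_apply_univ]
      _ ≤ ∫⁻ s in ball t δ ∩ Icc 0 γ.len, (K.indicator (g i) (γ.toFun s) + Kᶜ.indicator (fun _ => ∞) (γ.toFun s)) := by
        refine setLIntegral_mono' (measurableSet_ball.inter measurableSet_Icc) fun s hs => ?_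
        have : γ.toFun s ∈ Kᶜ := hsub hs
        rw [indicator_of_mem this]; simp
      _ ≤ _ := lintegral_mono_set inter_subset_right

lemma poinc_local {μ : Measure X} [ProperSpace X] {Cd CP lam : ℝ} (hd : Doubling μ Cd) (hp : Poincare μ CP lam)
    {Ω E : Set X} {c : ℝ≥0∞} {v : ℕ → X → ℝ} {g : ℕ → X → ℝ≥0∞} (hΩ : IsOpen Ω) (hE : MeasurableSet E)
    (hA : Approx μ Ω E c v g) {x : X} {s : ℝ} (hs : 0 < s) (hsub : closedBall x (lam * s) ⊆ Ω)
    {a : ℝ} (ha : 0 < a) (h1 : ENNReal.ofReal a * μ (ball x s) ≤ μ (ball x s ∩ E))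
    (h2 : ENNReal.ofReal a * μ (ball x s) ≤ μ (ball x s \ E)) :
    ∀ᶠ i in atTop, ENNReal.ofReal (a / (2 * CP * s)) * μ (ball x s) ≤
      ∫⁻ y in ball x (lam * s), g i y ∂μ := by
  obtain ⟨hCP, hlam, hp⟩ := hp
  set B := ball x s with hB
  have hBs : B ⊆ ball x (lam * s) := ball_subset_ball (by nlinarith)
  have hBΩ : B ⊆ Ω := hBs.trans (ball_subset_closedBall.trans hsub)
  have hBpos : 0 < μ B := hd.pos x hs
  have hBfin : μ B < ∞ := hd.fin x s
  have hconv : Tendsto (fun i => ∫⁻ y in B, ENNReal.ofReal |v i y - E.indicator (fun _ => (1:ℝ)) y| ∂μ) atTop (𝓝 0) := by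
    refine tendsto_of_tendsto_of_tendsto_of_le_of_le tendsto_const_nhds
      (hA.conv.compact (isCompact_closedBall x (lam * s)) hsub) (fun _ => by positivity)
      (fun i => lintegral_mono_set (hBs.trans ball_subset_closedBall))
  have hev := hconv.eventually (gt_mem_nhds (show 0 < ENNReal.ofReal (a / 2) * μ B from
    ENNReal.mul_pos (by simpa using ha) hBpos.ne'))
  filter_upwards [hev] with i hi
  set u := Ω.indicator (v i) with hu
  have hum : Measurable u := (hA.lip i).measurable_indicator hΩ
  have hu0 : ∀ y, 0 ≤ u y := fun y => indicator_nonneg (fun _ _ => hA.nonneg i _) y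
  have hu1 : ∀ y, u y ≤ 1 := fun y => indicator_le' (fun _ _ => hA.le_one i _) (fun _ _ => zero_le_one) y
  have hML : MemL1Loc μ univ u := by
    refine ⟨hum.aemeasurable, fun y _ => ⟨1, one_pos, ?_⟩⟩
    calc ∫⁻ z in univ ∩ ball y 1, ENNReal.ofReal |u z| ∂μ ≤ ∫⁻ z in univ ∩ ball y 1, 1 ∂μ := by
          refine lintegral_mono fun z => ?_
          rw [abs_of_nonneg (hu0 z)]
          simpa using ENNReal.ofReal_le_ofReal (hu1 z)
      _ < ∞ := by simpa using hd.fin y 1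
  have hP := hp x s hs u _ hML (poinc_ug hA isClosed_closedBall hsub i)
  set cc := ⨍ z in B, u z ∂μ with hcc
  have hInt : IntegrableOn (fun y => |u y - cc|) B μ := by
    refine Measure.integrableOn_of_bounded (M := 1 + |cc|) hBfin.ne (by fun_prop) (ae_of_all _ fun y => ?_)
    rw [Real.norm_eq_abs, abs_abs]
    have := abs_sub (u y) cc
    rw [abs_of_nonneg (hu0 y)] at this
    linarith [hu1 y]
  have hLHS : ENNReal.ofReal (⨍ y in B, |u y - cc| ∂μ) * μ B = ∫⁻ y in B, ENNReal.ofReal |u y - cc| ∂μ := by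
    rw [setAverage_eq, smul_eq_mul, measureReal_def, ENNReal.ofReal_mul (by positivity), ENNReal.ofReal_inv_of_pos
      (ENNReal.toReal_pos hBpos.ne' hBfin.ne), ENNReal.ofReal_toReal hBfin.ne,
      ofReal_integral_eq_lintegral_ofReal hInt (ae_of_all _ fun _ => abs_nonneg _), mul_comm, ← mul_assoc,
      ENNReal.mul_inv_cancel hBpos.ne' hBfin.ne, one_mul]
  have hRHS : ∫⁻ y in ball x (lam * s), ((closedBall x (lam * s)).indicator (g i) y +
      (closedBall x (lam * s))ᶜ.indicator (fun _ => ∞) y) ∂μ = ∫⁻ y in ball x (lam * s), g i y ∂μ := by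
    refine setLIntegral_congr_fun measurableSet_ball fun y hy => ?_
    have := ball_subset_closedBall hy
    rw [indicator_of_mem this, indicator_of_notMem (by simpa using this), add_zero]
  rw [hRHS] at hP
  have hup : ∫⁻ y in B, ENNReal.ofReal |u y - cc| ∂μ ≤ ENNReal.ofReal (CP * s) * ∫⁻ y in ball x (lam * s), g i y ∂μ := by
    rw [← hLHS]
    calc _ ≤ ENNReal.ofReal (CP * s) * ((∫⁻ y in ball x (lam * s), g i y ∂μ) / μ (ball x (lam * s))) * μ (ball x (lam * s)) := by
          gcongr
      _ = _ := by
          rw [mul_assoc, ENNReal.div_mul_cancel (hd.pos x (by positivity)).ne' (hd.fin x _).ne]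
  have hlow : ENNReal.ofReal a * μ B ≤ ∫⁻ y in B, ENNReal.ofReal |u y - cc| ∂μ + ENNReal.ofReal (a / 2) * μ B := by
    have e1 : ∫⁻ y in B, (E.indicator (fun _ => ENNReal.ofReal |1 - cc|) y + Eᶜ.indicator (fun _ => ENNReal.ofReal |cc|) y) ∂μ
        ≤ ∫⁻ y in B, (ENNReal.ofReal |u y - cc| + ENNReal.ofReal |v i y - E.indicator (fun _ => (1:ℝ)) y|) ∂μ := by
      refine setLIntegral_mono' measurableSet_ball fun y hy => ?_
      rw [← ENNReal.ofReal_add (abs_nonneg _) (abs_nonneg _), hu, indicator_of_mem (hBΩ hy)]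
      by_cases hyE : y ∈ E
      · rw [indicator_of_mem hyE, indicator_of_notMem (by simpa using hyE), indicator_of_mem hyE, add_zero]
        refine ENNReal.ofReal_le_ofReal ?_
        have := abs_sub_le 1 (v i y) cc
        rw [abs_sub_comm 1 (v i y)] at this
        linarith
      · rw [indicator_of_notMem hyE, indicator_of_mem (by simpa using hyE), indicator_of_notMem hyE, zero_add]
        refine ENNReal.ofReal_le_ofReal ?_
        have := abs_sub_le cc (v i y) 0
        rw [abs_sub_comm cc (v i y), sub_zero] at this
        linarith
    rw [lintegral_add_left (measurable_const.indicator hE), lintegral_add_left (by fun_prop), lintegral_indicator hE,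
      lintegral_indicator hE.compl, lintegral_const, lintegral_const, Measure.restrict_apply_univ, Measure.restrict_apply_univ,
      Measure.restrict_apply hE, Measure.restrict_apply hE.compl, inter_comm E, inter_comm Eᶜ, ← diff_eq] at e1
    refine le_trans ?_ (e1.trans (by gcongr))
    calc ENNReal.ofReal a * μ B ≤ (ENNReal.ofReal |1 - cc| + ENNReal.ofReal |cc|) * (ENNReal.ofReal a * μ B) := by
          refine le_mul_of_one_le_left (by positivity) ?_
          rw [← ENNReal.ofReal_add (abs_nonneg _) (abs_nonneg _), ENNReal.one_le_ofReal]
          have := abs_add_le (1 - cc) cc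
          simpa using this
      _ ≤ _ := by rw [add_mul]; gcongr
  have hhalf : ENNReal.ofReal a * μ B = ENNReal.ofReal (a / 2) * μ B + ENNReal.ofReal (a / 2) * μ B := by
    rw [← add_mul, ← ENNReal.ofReal_add (by positivity) (by positivity), add_halves]
  rw [hhalf] at hlow
  have hlow' := ENNReal.le_of_add_le_add_right (ENNReal.mul_ne_top ENNReal.ofReal_ne_top hBfin.ne) hlow
  have hfin := hlow'.trans hup
  have hCs : 0 < CP * s := by positivity
  have e : a / (2 * CP * s) = (CP * s)⁻¹ * (a / 2) := by field_simp
  rw [e, ENNReal.ofReal_mul (by positivity), ENNReal.ofReal_inv_of_pos hCs, mul_assoc]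
  calc _ ≤ (ENNReal.ofReal (CP * s))⁻¹ * (ENNReal.ofReal (CP * s) * ∫⁻ y in ball x (lam * s), g i y ∂μ) := by gcongr
    _ = _ := by rw [← mul_assoc, ENNReal.inv_mul_cancel (by simpa using hCs) ENNReal.ofReal_ne_top, one_mul]


lemma vitali6 [SecondCountableTopology X] {ι : Type*} (t : Set ι) (x : ι → X) (r : ι → ℝ) (R : ℝ)
    (hr0 : ∀ a ∈ t, 0 < r a) (hr : ∀ a ∈ t, r a ≤ R) :
    ∃ u ⊆ t, u.Countable ∧ (u.PairwiseDisjoint fun a => closedBall (x a) (r a)) ∧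
      ∀ a ∈ t, ∃ b ∈ u, closedBall (x a) (r a) ⊆ ball (x b) (6 * r b) := by
  obtain ⟨u, hut, hd, hc⟩ := Vitali.exists_disjoint_subfamily_covering_enlargement_closedBall t x r R hr 5 (by norm_num)
  refine ⟨u, hut, hd.countable_of_nonempty_interior fun i hi => ?_, hd, fun a ha => ?_⟩
  · exact ⟨x i, ball_subset_interior_closedBall (mem_ball_self (hr0 i (hut hi)))⟩
  · obtain ⟨b, hb, hs⟩ := hc a ha
    exact ⟨b, hb, hs.trans (closedBall_subset_ball (by linarith [hr0 b (hut hb)]))⟩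

lemma density_pt {μ : Measure X} [SecondCountableTopology X] {Cd : ℝ} (hd : Doubling μ Cd) (E : Set X) :
    ∀ᵐ x ∂μ.restrict E, ∃ δ > 0, ∀ t : ℝ, 0 < t → t < δ →
      ENNReal.ofReal (1 / (2 * Cd)) * μ (ball x t) ≤ μ (ball x t ∩ E) := by
  have := hd.unif
  have := hd.locfin
  filter_upwards [IsUnifLocDoublingMeasure.ae_tendsto_measure_inter_div μ E 1] with x hx
  have h := hx (l := 𝓝[>] (0:ℝ)) (fun _ => x) (fun t => t) tendsto_id (by
    filter_upwards [self_mem_nhdsWithin] with t ht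
    have : (0:ℝ) < t := ht
    simp [this.le])
  have hev := h.eventually (lt_mem_nhds (show (1/2 : ℝ≥0∞) < 1 by simp))
  rw [eventually_nhdsWithin_iff, Metric.eventually_nhds_iff] at hev
  obtain ⟨δ, hδ, hev⟩ := hev
  have hCd := hd.1
  refine ⟨2 * δ, by positivity, fun t ht htδ => ?_⟩
  have h2 := hev (y := t / 2) (by rw [Real.dist_eq, sub_zero, abs_of_pos (by positivity)]; linarith)
    (show (0:ℝ) < t / 2 by positivity)
  have hpos : 0 < μ (closedBall x (t/2)) := (hd.pos x (by positivity : 0 < t/2)).trans_le (measure_mono ball_subset_closedBall)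
  have hfin : μ (closedBall x (t/2)) ≠ ∞ := ne_top_of_le_ne_top (hd.fin x t).ne (measure_mono (closedBall_subset_ball (by linarith)))
  rw [ENNReal.lt_div_iff_mul_lt (Or.inl hpos.ne') (Or.inl hfin)] at h2
  have h3 := (hd.2 x (t/2) (by positivity)).2.1
  rw [mul_div_cancel₀ _ (two_ne_zero)] at h3
  have e : ENNReal.ofReal (1 / (2 * Cd)) = 1/2 * (ENNReal.ofReal Cd)⁻¹ := by
    rw [← ENNReal.ofReal_inv_of_pos (by positivity), one_div, mul_inv, ENNReal.ofReal_mul (by norm_num),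
      ENNReal.ofReal_inv_of_pos (by norm_num)]
    simp
  calc ENNReal.ofReal (1 / (2 * Cd)) * μ (ball x t) ≤ ENNReal.ofReal (1 / (2 * Cd)) * (ENNReal.ofReal Cd * μ (ball x (t/2))) := by gcongr
    _ = 1 / 2 * μ (ball x (t/2)) := by
      rw [e, mul_assoc, ← mul_assoc (ENNReal.ofReal Cd)⁻¹, ENNReal.inv_mul_cancel (by simpa using by linarith) ENNReal.ofReal_ne_top, one_mul]
    _ ≤ 1 / 2 * μ (closedBall x (t/2)) := by gcongr; exact ball_subset_closedBall
    _ ≤ μ (E ∩ closedBall x (t/2)) := h2.le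
    _ ≤ μ (ball x t ∩ E) := by
      rw [inter_comm]
      gcongr
      exact closedBall_subset_ball (by linarith)

lemma good_radius {μ : Measure X} {Cd : ℝ} (hd : Doubling μ Cd) {E : Set X} (hE : MeasurableSet E) {x : X}
    (hx : ∃ δ > 0, ∀ t : ℝ, 0 < t → t < δ →
      ENNReal.ofReal (1 / (2 * Cd)) * μ (ball x t) ≤ μ (ball x t ∩ E)) {ρ : ℝ} (hρ : 0 < ρ)
    (h : μ (ball x ρ ∩ E) < ENNReal.ofReal (1 / (2 * Cd)) * μ (ball x ρ)) :
    ∃ s, 0 < s ∧ s ≤ ρ ∧ ENNReal.ofReal (1 / (2 * Cd ^ 2)) * μ (ball x s) ≤ μ (ball x s ∩ E) ∧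
      ENNReal.ofReal (1 / (2 * Cd ^ 2)) * μ (ball x s) ≤ μ (ball x s \ E) := by
  classical
  obtain ⟨δ, hδ, hx⟩ := hx
  have hCd := hd.1
  have hex : ∃ k : ℕ, ENNReal.ofReal (1 / (2 * Cd)) * μ (ball x ((1/2)^k * ρ)) ≤ μ (ball x ((1/2)^k * ρ) ∩ E) := by
    obtain ⟨k, hk⟩ := exists_pow_lt_of_lt_one (show 0 < δ / ρ by positivity) (show (1/2 : ℝ) < 1 by norm_num)
    exact ⟨k, hx _ (by positivity) ((lt_div_iff₀ hρ).1 hk)⟩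
  have hk := Nat.find_spec hex
  have hmin := fun m => Nat.find_min hex (m := m)
  set k := Nat.find hex
  rcases Nat.eq_zero_or_pos k with h0 | h0
  · rw [h0] at hk; simp only [pow_zero, one_mul] at hk
    exact absurd h (not_lt.2 hk)
  obtain ⟨m, hm⟩ : ∃ m, k = m + 1 := ⟨k - 1, by omega⟩
  have hm1 := hmin m (by omega)
  rw [hm] at hk
  push Not at hm1
  set s := (1/2:ℝ)^m * ρ with hs
  have hs0 : 0 < s := by positivity
  have hs2 : (1/2:ℝ)^(m+1) * ρ = s / 2 := by rw [hs, pow_succ]; ring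
  rw [hs2] at hk
  have hle : 1 / (2 * Cd ^ 2) ≤ 1 / 2 := by
    apply one_div_le_one_div_of_le (by norm_num); nlinarith
  refine ⟨s, hs0, ?_, ?_, ?_⟩
  · exact mul_le_of_le_one_left hρ.le (pow_le_one₀ (by norm_num) (by norm_num))
  · have h3 := (hd.2 x (s/2) (by positivity)).2.1
    rw [mul_div_cancel₀ _ (two_ne_zero)] at h3
    calc _ ≤ ENNReal.ofReal (1 / (2 * Cd ^ 2)) * (ENNReal.ofReal Cd * μ (ball x (s/2))) := by gcongr
      _ = ENNReal.ofReal (1 / (2 * Cd)) * μ (ball x (s/2)) := by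
        rw [← mul_assoc, ← ENNReal.ofReal_mul (by positivity)]
        congr 2
        field_simp
      _ ≤ _ := hk.trans (measure_mono (inter_subset_inter_left _ (ball_subset_ball (by linarith))))
  · have hf := (hd.fin x s).ne
    have hle2 : 1 / (2 * Cd) ≤ 1 / 2 := by
      apply one_div_le_one_div_of_le (by norm_num); nlinarith
    have h4 : μ (ball x s) = μ (ball x s ∩ E) + μ (ball x s \ E) := (measure_inter_add_sdiff _ hE).symm
    have h5 : μ (ball x s ∩ E) ≤ ENNReal.ofReal (1/2) * μ (ball x s) := hm1.le.trans (by gcongr)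
    have h6 : ENNReal.ofReal (1/2) * μ (ball x s) + ENNReal.ofReal (1/2) * μ (ball x s) = μ (ball x s) := by
      rw [← add_mul, ← ENNReal.ofReal_add (by norm_num) (by norm_num)]; norm_num
    have h7 : ENNReal.ofReal (1/2) * μ (ball x s) + ENNReal.ofReal (1/2) * μ (ball x s) ≤
        ENNReal.ofReal (1/2) * μ (ball x s) + μ (ball x s \ E) := by
      rw [h6]; calc _ = _ := h4
        _ ≤ _ := by gcongr
    have h8 := ENNReal.le_of_add_le_add_left (ENNReal.mul_ne_top ENNReal.ofReal_ne_top hf) h7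
    refine le_trans ?_ h8
    gcongr


lemma boxing {μ : Measure X} [ProperSpace X] {Cd CP lam : ℝ} (hd : Doubling μ Cd)
    (hp : Poincare μ CP lam) {M Λ : ℝ} (hM : 0 < M) (hΛ : 4 ≤ Λ) :
    ∃ α0 : ℝ, 0 < α0 ∧ ∀ {Ω E : Set X} {c : ℝ≥0∞} {v : ℕ → X → ℝ} {g : ℕ → X → ℝ≥0∞},
      IsOpen Ω → MeasurableSet E → Approx μ Ω E c v g → ∀ (y : X) (r : ℝ), 0 < r →
      closedBall y (Λ * r) ⊆ Ω →
      μ (ball y (Λ * r) ∩ E) ≤ ENNReal.ofReal (2 * α0) * μ (ball y (Λ * r)) →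
      ∀ᶠ i in atTop, ENNReal.ofReal (M / r) * μ (ball y r ∩ E) ≤
        ∫⁻ z in ball y (Λ / 2 * r), g i z ∂μ := by
  have hCd := hd.1
  have hCP := hp.1
  have hlam := hp.2.1
  obtain ⟨C6, hC6, hC6'⟩ := hd.scale (6 * lam)
  have hC6p : (0:ℝ) < C6 := lt_of_lt_of_le one_pos (by exact_mod_cast hC6)
  set a : ℝ := 1 / (2 * Cd ^ 2) with ha
  have ha0 : 0 < a := by positivity
  set κ : ℝ := min (1 / lam) (a / (4 * CP * M * C6)) with hκ
  have hκ0 : 0 < κ := lt_min (by positivity) (by positivity)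
  have hκ1 : lam * κ ≤ 1 := by
    have : κ ≤ 1 / lam := min_le_left _ _
    rwa [le_div_iff₀ (by positivity), mul_comm] at this
  have hκle : κ ≤ 1 := by nlinarith
  have hκ2 : κ * (4 * CP * M * C6) ≤ a := by
    have : κ ≤ a / (4 * CP * M * C6) := min_le_right _ _
    rwa [le_div_iff₀ (by positivity)] at this
  obtain ⟨Cκ, hCκ, hCκ'⟩ := hd.scale (2 * Λ / κ)
  have hCκp : (0:ℝ) < Cκ := lt_of_lt_of_le one_pos (by exact_mod_cast hCκ)
  refine ⟨1 / (8 * Cd * Cκ), by positivity, ?_⟩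
  intro Ω E c v g hΩ hE hA y r hr hsub hsmall
  by_cases hz : μ (ball y r ∩ E) = 0
  · simp [hz]
  set S : Set X := {x | x ∈ ball y r ∩ E ∧ ∃ δ > 0, ∀ t : ℝ, 0 < t → t < δ →
      ENNReal.ofReal (1 / (2 * Cd)) * μ (ball x t) ≤ μ (ball x t ∩ E)} with hS
  have hSμ : μ (ball y r ∩ E) ≤ μ S := by
    have h1 := density_pt hd E
    rw [ae_restrict_iff' hE] at h1
    refine measure_mono_ae ?_
    filter_upwards [h1] with x hx hx2
    exact ⟨hx2, hx hx2.2⟩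
  have hgood : ∀ x : X, ∃ s : ℝ, x ∈ S → (0 < s ∧ s ≤ κ * r ∧
      ENNReal.ofReal a * μ (ball x s) ≤ μ (ball x s ∩ E) ∧
      ENNReal.ofReal a * μ (ball x s) ≤ μ (ball x s \ E)) := by
    intro x
    by_cases hx : x ∈ S
    · have hxy : dist x y < r := hx.1.1
      obtain ⟨s, hs⟩ := good_radius hd hE hx.2 (show 0 < κ * r by positivity) (by
        calc μ (ball x (κ * r) ∩ E) ≤ μ (ball y (Λ * r) ∩ E) := by
              gcongr
              refine ball_subset_ball' ?_
              nlinarith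
          _ ≤ _ := hsmall
          _ ≤ ENNReal.ofReal (2 * (1 / (8 * Cd * Cκ))) * μ (ball x (2 * Λ / κ * (κ * r))) := by
              gcongr
              refine ball_subset_ball' ?_
              rw [dist_comm]
              have : 2 * Λ / κ * (κ * r) = 2 * Λ * r := by field_simp
              rw [this]
              nlinarith
          _ ≤ ENNReal.ofReal (2 * (1 / (8 * Cd * Cκ))) * (Cκ * μ (ball x (κ * r))) := by
              gcongr
              exact hCκ' x _ (by positivity)
          _ = ENNReal.ofReal (1 / (4 * Cd)) * μ (ball x (κ * r)) := by
              rw [← mul_assoc, ← ENNReal.ofReal_coe_nnreal, ← ENNReal.ofReal_mul (by positivity)]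
              congr 2
              field_simp
              norm_num
          _ < _ := by
              rw [mul_comm, mul_comm (ENNReal.ofReal _)]
              refine ENNReal.mul_lt_mul_right (hd.pos x (by positivity)).ne' (hd.fin x _).ne ?_
              rw [ENNReal.ofReal_lt_ofReal_iff (by positivity)]
              apply one_div_lt_one_div_of_lt (by positivity)
              linarith)
      exact ⟨s, fun _ => hs⟩
    · exact ⟨0, fun h => absurd h hx⟩
  choose s hs using hgood
  obtain ⟨u, huS, huc, hud, hcov⟩ := vitali6 S (fun x => x) (fun x => lam * s x) (lam * (κ * r))
    (fun x hx => by have := (hs x hx).1; positivity) (fun x hx => by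
      have := (hs x hx).2.1; gcongr)
  have := huc.to_subtype
  have hsum : μ (ball y r ∩ E) ≤ ∑' b : u, C6 * μ (ball (b:X) (s b)) := by
    refine hSμ.trans ?_
    calc μ S ≤ μ (⋃ b : u, ball (b:X) (6 * lam * s b)) := by
          refine measure_mono fun x hx => ?_
          obtain ⟨b, hb, hsb⟩ := hcov x hx
          refine mem_iUnion.2 ⟨⟨b, hb⟩, ?_⟩
          rw [mul_assoc]
          exact hsb (mem_closedBall_self (by have := (hs x hx).1; positivity))
      _ ≤ ∑' b : u, μ (ball (b:X) (6 * lam * s b)) := measure_iUnion_le _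
      _ ≤ _ := by
          gcongr with b
          exact hC6' b _ (hs b (huS b.2)).1
  have hfinE : μ (ball y r ∩ E) ≠ ∞ := ne_top_of_le_ne_top (hd.fin y r).ne (measure_mono inter_subset_left)
  have hlt : μ (ball y r ∩ E) / 2 < ∑' b : u, C6 * μ (ball (b:X) (s b)) :=
    (ENNReal.half_lt_self hz hfinE).trans_le hsum
  rw [ENNReal.tsum_eq_iSup_sum, lt_iSup_iff] at hlt
  obtain ⟨t, ht⟩ := hlt
  have hballs : ∀ b ∈ S, closedBall b (lam * s b) ⊆ ball y (Λ / 2 * r) := by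
    intro b hb
    refine closedBall_subset_ball' ?_
    have h1 : dist b y < r := hb.1.1
    have h2 := (hs b hb).2.1
    have h3 : lam * s b ≤ r := by
      calc lam * s b ≤ lam * (κ * r) := by gcongr
        _ = (lam * κ) * r := by ring
        _ ≤ r := by nlinarith
    nlinarith
  have hev : ∀ᶠ i in atTop, ∀ b ∈ t, ENNReal.ofReal (a / (2 * CP * s b)) * μ (ball (b:X) (s b)) ≤
      ∫⁻ z in ball (b:X) (lam * s b), g i z ∂μ := by
    rw [Filter.eventually_all_finset]
    intro b _
    obtain ⟨h1, h2, h3, h4⟩ := hs b (huS b.2)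
    refine poinc_local hd hp hΩ hE hA h1 ?_ ha0 h3 h4
    refine (hballs b (huS b.2)).trans (ball_subset_closedBall.trans ((closedBall_subset_closedBall ?_).trans hsub))
    nlinarith
  filter_upwards [hev] with i hi
  have hstep : ENNReal.ofReal (M / r) * μ (ball y r ∩ E) ≤
      ∑ b ∈ t, ENNReal.ofReal (a / (2 * CP * s b)) * μ (ball (b:X) (s b)) := by
    calc ENNReal.ofReal (M / r) * μ (ball y r ∩ E)
        = ENNReal.ofReal (M / r) * (2 * (μ (ball y r ∩ E) / 2)) := by
          rw [ENNReal.mul_div_cancel (by norm_num) (by norm_num)]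
      _ ≤ ENNReal.ofReal (M / r) * (2 * ∑ b ∈ t, C6 * μ (ball (b:X) (s b))) := by gcongr
      _ = ∑ b ∈ t, ENNReal.ofReal (2 * M * C6 / r) * μ (ball (b:X) (s b)) := by
          rw [Finset.mul_sum, Finset.mul_sum]
          refine Finset.sum_congr rfl fun b _ => ?_
          rw [← mul_assoc, ← mul_assoc]
          congr 1
          have : (2:ℝ≥0∞) = ENNReal.ofReal 2 := by simp
          rw [this, ← ENNReal.ofReal_coe_nnreal, ← ENNReal.ofReal_mul (by positivity), ← ENNReal.ofReal_mul (by positivity)]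
          congr 1
          ring
      _ ≤ _ := by
          refine Finset.sum_le_sum fun b hb => mul_le_mul_left (ENNReal.ofReal_le_ofReal ?_) _
          obtain ⟨h1, h2, -, -⟩ := hs b (huS b.2)
          rw [div_le_div_iff₀ hr (by positivity)]
          calc 2 * M * C6 * (2 * CP * s b) ≤ 2 * M * C6 * (2 * CP * (κ * r)) := by gcongr
            _ = (κ * (4 * CP * M * C6)) * r := by ring
            _ ≤ a * r := by gcongr
  refine hstep.trans ((Finset.sum_le_sum hi).trans ?_)
  rw [← lintegral_biUnion_finset (fun b _ b' _ hbb => (hud b.2 b'.2 (fun h => hbb (Subtype.ext h))).mono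
    ball_subset_closedBall ball_subset_closedBall) (fun _ _ => measurableSet_ball)]
  exact lintegral_mono_set (iUnion₂_subset fun b _ => ball_subset_closedBall.trans (hballs b (huS b.2)))


/-- A bad ball at level `α`. -/
structure Bad (μ : Measure X) (Ω E : Set X) (α : ℝ) (p : X × ℝ) : Prop where
  pos : 0 < p.2
  sub : closedBall p.1 (4 * p.2) ⊆ Ω
  low : ENNReal.ofReal α * μ (ball p.1 p.2) ≤ μ (ball p.1 p.2 ∩ E)
  up : μ (ball p.1 (4 * p.2) ∩ E) ≤ ENNReal.ofReal (2 * α) * μ (ball p.1 (4 * p.2))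

/-- Weight of a ball. -/
def wt (μ : Measure X) (p : X × ℝ) : ℝ≥0∞ := ENNReal.ofReal (1 / p.2) * μ (ball p.1 p.2)

lemma wt_fin {μ : Measure X} {Cd : ℝ} (hd : Doubling μ Cd) (p : X × ℝ) : wt μ p ≠ ∞ :=
  ENNReal.mul_ne_top ENNReal.ofReal_ne_top (hd.fin _ _).ne

lemma one_step {μ : Measure X} [ProperSpace X] {Cd CP lam : ℝ} (hd : Doubling μ Cd)
    (hp : Poincare μ CP lam) :
    ∃ α0 : ℝ, 0 < α0 ∧ ∀ {Ω E : Set X} {c : ℝ≥0∞} {v : ℕ → X → ℝ} {g : ℕ → X → ℝ≥0∞},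
      IsOpen Ω → MeasurableSet E → c < ∞ → Approx μ Ω E c v g → ∀ α : ℝ, 0 < α → α ≤ α0 →
      ∀ F : Finset (X × ℝ), (∀ p ∈ F, Bad μ Ω E α p) →
      ((F : Set (X × ℝ)).PairwiseDisjoint fun p => closedBall p.1 (4 * p.2)) →
      ∀ N : ℕ, ∃ i ≥ N, LocLipOn (fun x => v i x * (1 - tents F (fun p => p.1) (fun p => 2 * p.2) x)) Ω ∧
        ∃ h, IsWeakUpperGradientOn μ (fun x => v i x * (1 - tents F (fun p => p.1) (fun p => 2 * p.2) x)) h Ω ∧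
          ∫⁻ x in Ω, h x ∂μ + ENNReal.ofReal α * ∑ p ∈ F, wt μ p ≤ c := by
  obtain ⟨C4, hC4, hC4'⟩ := hd.scale 4
  have hC4p : (0:ℝ) < C4 := lt_of_lt_of_le one_pos (by exact_mod_cast hC4)
  obtain ⟨α0, hα0, hbox⟩ := boxing hd hp (M := 4 * C4 + 1) (Λ := 4) (by positivity) le_rfl
  refine ⟨α0, hα0, ?_⟩
  intro Ω E c v g hΩ hE hc hA α hα hαle F hF hdisj N
  have hr : ∀ p ∈ F, 0 < 2 * p.2 := fun p hp => by have := (hF p hp).pos; positivity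
  have h4 : ∀ p : X × ℝ, 2 * (2 * p.2) = 4 * p.2 := fun p => by ring
  have hdisj' : (F : Set (X × ℝ)).PairwiseDisjoint fun p => ball p.1 (2 * (2 * p.2)) := by
    intro p hp q hq hpq
    simp only [Function.onFun, h4]
    exact (hdisj hp hq hpq).mono ball_subset_closedBall ball_subset_closedBall
  have hev1 : ∀ᶠ i in atTop, ∀ p ∈ F, ENNReal.ofReal ((4 * C4 + 1) / p.2) * μ (ball p.1 p.2 ∩ E) ≤
      ∫⁻ z in ball p.1 (2 * p.2), g i z ∂μ := by
    rw [Filter.eventually_all_finset]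
    intro p hp
    have hb := hF p hp
    have := hbox hΩ hE hA p.1 p.2 hb.pos hb.sub (hb.up.trans (by gcongr))
    have e : (4:ℝ) / 2 = 2 := by norm_num
    rwa [e] at this
  have hev2 : ∀ᶠ i in atTop, ∀ p ∈ F, ∫⁻ z in closedBall p.1 (4 * p.2), ENNReal.ofReal |v i z - E.indicator (fun _ => (1:ℝ)) z| ∂μ
      < ENNReal.ofReal (2 * α) * μ (ball p.1 (4 * p.2)) := by
    rw [Filter.eventually_all_finset]
    intro p hp
    have hb := hF p hp
    refine (hA.conv.compact (isCompact_closedBall _ _) hb.sub).eventually (gt_mem_nhds ?_)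
    exact ENNReal.mul_pos (by simpa using hα) (hd.pos _ (by have := hb.pos; positivity)).ne'
  obtain ⟨i, hi1, hi2, hiN⟩ := (hev1.and (hev2.and (eventually_ge_atTop N))).exists
  have hgfin := (hA.lt i).trans hc
  obtain ⟨hL, h, hh, hle⟩ := competitor hΩ (hA.lip i) (hA.nonneg i) (hA.le_one i) (hA.meas i) (hA.ug i) hgfin
    (s := F) (c := fun p => p.1) (ρ := fun p => 2 * p.2) hr hdisj'
  refine ⟨i, hiN, hL, h, hh, ?_⟩
  set W := ∑ p ∈ F, wt μ p with hW
  have hWfin : W ≠ ∞ := ENNReal.sum_ne_top.2 fun p _ => wt_fin hd p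
  -- cost
  have hcost : ∑ p ∈ F, ENNReal.ofReal (1 / (2 * p.2)) *
      ∫⁻ x in Ω ∩ ball p.1 (2 * (2 * p.2)), ENNReal.ofReal (v i x) ∂μ ≤ ENNReal.ofReal (4 * C4 * α) * W := by
    rw [hW, Finset.mul_sum]
    refine Finset.sum_le_sum fun p hp => ?_
    have hb := hF p hp
    have hp0 := hb.pos
    have e1 : ∫⁻ x in Ω ∩ ball p.1 (2 * (2 * p.2)), ENNReal.ofReal (v i x) ∂μ ≤ ENNReal.ofReal (4 * α) * μ (ball p.1 (4 * p.2)) := by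
      rw [h4]
      calc ∫⁻ x in Ω ∩ ball p.1 (4 * p.2), ENNReal.ofReal (v i x) ∂μ
          ≤ ∫⁻ x in ball p.1 (4 * p.2), (E.indicator (fun _ => 1) x + ENNReal.ofReal |v i x - E.indicator (fun _ => (1:ℝ)) x|) ∂μ := by
            refine (lintegral_mono_set inter_subset_right).trans (lintegral_mono fun x => ?_)
            by_cases hx : x ∈ E
            · simp only [indicator_of_mem hx]
              refine le_trans ?_ le_self_add
              simpa using ENNReal.ofReal_le_ofReal (hA.le_one i x)
            · simp only [indicator_of_notMem hx, sub_zero, zero_add]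
              exact ENNReal.ofReal_le_ofReal (le_abs_self _)
        _ = μ (ball p.1 (4 * p.2) ∩ E) + ∫⁻ x in ball p.1 (4 * p.2), ENNReal.ofReal |v i x - E.indicator (fun _ => (1:ℝ)) x| ∂μ := by
            rw [lintegral_add_left (measurable_const.indicator hE), lintegral_indicator hE, lintegral_const,
              Measure.restrict_apply_univ, Measure.restrict_apply hE, inter_comm E, one_mul]
        _ ≤ ENNReal.ofReal (2 * α) * μ (ball p.1 (4 * p.2)) + ENNReal.ofReal (2 * α) * μ (ball p.1 (4 * p.2)) := by
            gcongr
            · exact hb.up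
            · exact (lintegral_mono_set ball_subset_closedBall).trans (hi2 p hp).le
        _ = _ := by
            rw [← add_mul, ← ENNReal.ofReal_add (by positivity) (by positivity)]
            congr 2; ring
    calc _ ≤ ENNReal.ofReal (1 / p.2) * (ENNReal.ofReal (4 * α) * (C4 * μ (ball p.1 p.2))) := by
          refine mul_le_mul' (ENNReal.ofReal_le_ofReal ?_) (e1.trans ?_)
          · exact one_div_le_one_div_of_le hp0 (by linarith)
          · gcongr; exact hC4' _ _ hp0
      _ = _ := by
          have : ENNReal.ofReal (4 * C4 * α) = ENNReal.ofReal (4 * α) * C4 := by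
            rw [← ENNReal.ofReal_coe_nnreal, ← ENNReal.ofReal_mul (by positivity)]; congr 1; ring
          rw [this, wt]; ring
  have hgain : ENNReal.ofReal ((4 * C4 + 1) * α) * W ≤ ∫⁻ x in ⋃ p ∈ F, ball p.1 (2 * p.2), g i x ∂μ := by
    rw [lintegral_biUnion_finset (fun p hp q hq hpq => (hdisj' hp hq hpq).mono (ball_subset_ball (by linarith [hr p hp]))
      (ball_subset_ball (by linarith [hr q hq]))) (fun _ _ => measurableSet_ball), hW, Finset.mul_sum]
    refine Finset.sum_le_sum fun p hp => le_trans ?_ (hi1 p hp)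
    have hb := hF p hp
    have hp0 := hb.pos
    calc _ = ENNReal.ofReal ((4 * C4 + 1) / p.2) * (ENNReal.ofReal α * μ (ball p.1 p.2)) := by
          rw [wt, ← mul_assoc, ← mul_assoc, ← ENNReal.ofReal_mul (by positivity), ← ENNReal.ofReal_mul (by positivity)]
          congr 2; field_simp
      _ ≤ _ := by gcongr; exact hb.low
  have hUΩ : (⋃ p ∈ F, ball p.1 (2 * p.2)) ⊆ Ω := iUnion₂_subset fun p hp =>
    (ball_subset_closedBall.trans (closedBall_subset_closedBall (by linarith [hr p hp]))).trans (hF p hp).sub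
  have hUm : MeasurableSet (⋃ p ∈ F, ball p.1 (2 * p.2)) := F.measurableSet_biUnion fun _ _ => measurableSet_ball
  have hsplit : ∫⁻ x in Ω \ ⋃ p ∈ F, ball p.1 (2 * p.2), g i x ∂μ + ∫⁻ x in ⋃ p ∈ F, ball p.1 (2 * p.2), g i x ∂μ = ∫⁻ x in Ω, g i x ∂μ := by
    have := lintegral_inter_add_sdiff (μ := μ) (g i) Ω hUm
    rw [inter_eq_self_of_subset_right hUΩ, add_comm] at this
    exact this
  have hfinal : (∫⁻ x in Ω, h x ∂μ + ENNReal.ofReal α * W) + ENNReal.ofReal (4 * C4 * α) * W ≤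
      c + ENNReal.ofReal (4 * C4 * α) * W := by
    calc _ = ∫⁻ x in Ω, h x ∂μ + ENNReal.ofReal ((4 * C4 + 1) * α) * W := by
          rw [add_assoc, ← add_mul, ← ENNReal.ofReal_add (by positivity) (by positivity)]
          congr 3; ring
      _ ≤ (∫⁻ x in Ω \ ⋃ p ∈ F, ball p.1 (2 * p.2), g i x ∂μ + ENNReal.ofReal (4 * C4 * α) * W) + ∫⁻ x in ⋃ p ∈ F, ball p.1 (2 * p.2), g i x ∂μ := by
          refine add_le_add (hle.trans ?_) hgain
          gcongr
      _ = ∫⁻ x in Ω, g i x ∂μ + ENNReal.ofReal (4 * C4 * α) * W := by rw [← hsplit]; ring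
      _ ≤ _ := by gcongr; exact (hA.lt i).le
  exact ENNReal.le_of_add_le_add_right (ENNReal.mul_ne_top ENNReal.ofReal_ne_top hWfin) hfinal


lemma main_lemma {μ : Measure X} [ProperSpace X] {Cd CP lam : ℝ} (hd : Doubling μ Cd)
    (hp : Poincare μ CP lam) :
    ∃ α0 : ℝ, 0 < α0 ∧ ∀ {Ω E : Set X}, IsOpen Ω → MeasurableSet E → perimOpen μ E Ω < ∞ →
      ∀ α : ℝ, 0 < α → α ≤ α0 → ∀ ε : ℝ, 0 < ε → ∃ R : ℝ, 0 < R ∧ R ≤ 1 ∧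
      ∀ F : Finset (X × ℝ), (∀ p ∈ F, Bad μ Ω E α p ∧ p.2 ≤ R) →
      ((F : Set (X × ℝ)).PairwiseDisjoint fun p => closedBall p.1 (4 * p.2)) →
      ∑ p ∈ F, wt μ p ≤ ENNReal.ofReal ε := by
  obtain ⟨C4, hC4, hC4'⟩ := hd.scale 4
  obtain ⟨α0, hα0, hstep⟩ := one_step hd hp
  refine ⟨α0, hα0, ?_⟩
  intro Ω E hΩ hE hfin α hα hαle ε hε
  by_contra hcon
  push Not at hcon
  have hF : ∀ n : ℕ, ∃ F : Finset (X × ℝ), (∀ p ∈ F, Bad μ Ω E α p ∧ p.2 ≤ 1 / ((n:ℝ) + 1)) ∧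
      ((F : Set (X × ℝ)).PairwiseDisjoint fun p => closedBall p.1 (4 * p.2)) ∧
      ENNReal.ofReal ε < ∑ p ∈ F, wt μ p := by
    intro n
    obtain ⟨F, h1, h2, h3⟩ := hcon (1 / ((n:ℝ) + 1)) (by positivity) (by
      rw [div_le_one (by positivity)]; linarith [n.cast_nonneg (α := ℝ)])
    exact ⟨F, h1, h2, h3⟩
  choose F hFb hFd hFs using hF
  set I := perimOpen μ E Ω with hI
  set δ := ENNReal.ofReal (α * ε / 2) with hδ
  have hδ0 : δ ≠ 0 := by rw [hδ]; simpa using by positivity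
  have hδt : δ ≠ ∞ := ENNReal.ofReal_ne_top
  have hcfin : I + δ < ∞ := ENNReal.add_lt_top.2 ⟨hfin, hδt.lt_top⟩
  obtain ⟨v, g, hA⟩ := exists_approx (μ := μ) (E := E) (Ω := Ω) (c := I + δ)
    (ENNReal.lt_add_right hfin.ne hδ0)
  have hs := fun n => hstep hΩ hE hcfin hA α hα hαle (F n) (fun p hp => (hFb n p hp).1) (hFd n) n
  choose i hin hL h hh hle using hs
  set T : ℕ → X → ℝ := fun n => tents (F n) (fun p => p.1) (fun p => 2 * p.2) with hT
  have hαε : δ + δ ≤ ENNReal.ofReal (α * ε) := by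
    rw [hδ, ← ENNReal.ofReal_add (by positivity) (by positivity), add_halves]
  have hbound : ∀ n, ∫⁻ x in Ω, h n x ∂μ + δ ≤ I := by
    intro n
    have h1 : (∫⁻ x in Ω, h n x ∂μ + δ) + δ ≤ I + δ := by
      refine le_trans ?_ (hle n)
      rw [add_assoc]
      gcongr
      refine hαε.trans ?_
      rw [ENNReal.ofReal_mul hα.le]
      gcongr
      exact (hFs n).le
    exact ENNReal.le_of_add_le_add_right hδt h1
  -- integral of tents
  have hTint : ∀ n, ∫⁻ x, ENNReal.ofReal (T n x) ∂μ ≤ C4 * (ENNReal.ofReal (1 / ((n:ℝ) + 1)) * ((I + δ) / ENNReal.ofReal α)) := by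
    intro n
    have hr : ∀ p ∈ F n, 0 < 2 * p.2 := fun p hp => by have := (hFb n p hp).1.pos; positivity
    calc ∫⁻ x, ENNReal.ofReal (T n x) ∂μ ≤ ∫⁻ x, ∑ p ∈ F n, (ball p.1 (4 * p.2)).indicator (fun _ => 1) x ∂μ := by
          refine lintegral_mono fun x => ?_
          simp only [hT, tents]
          rw [ENNReal.ofReal_sum_of_nonneg fun _ _ => tent_nonneg _ _ _]
          refine Finset.sum_le_sum fun p hp => ?_
          by_cases hx : x ∈ ball p.1 (4 * p.2)
          · rw [indicator_of_mem hx]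
            simpa using ENNReal.ofReal_le_ofReal (tent_le_one p.1 (2 * p.2) x)
          · rw [indicator_of_notMem hx, tent_zero (hr p hp) (by
              rw [show 2 * (2 * p.2) = 4 * p.2 by ring]; exact hx)]
            simp
      _ = ∑ p ∈ F n, μ (ball p.1 (4 * p.2)) := by
          rw [lintegral_finsetSum _ fun p _ => measurable_const.indicator measurableSet_ball]
          refine Finset.sum_congr rfl fun p _ => ?_
          rw [lintegral_indicator measurableSet_ball, lintegral_const, Measure.restrict_apply_univ, one_mul]
      _ ≤ ∑ p ∈ F n, C4 * (ENNReal.ofReal (1 / ((n:ℝ) + 1)) * wt μ p) := by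
          refine Finset.sum_le_sum fun p hp => ?_
          obtain ⟨hb, hpn⟩ := hFb n p hp
          have hp0 := hb.pos
          refine (hC4' p.1 p.2 hp0).trans ?_
          gcongr
          calc μ (ball p.1 p.2) = ENNReal.ofReal p.2 * wt μ p := by
                rw [wt, ← mul_assoc, ← ENNReal.ofReal_mul hp0.le, mul_one_div_cancel hp0.ne']; simp
            _ ≤ _ := by gcongr
      _ = C4 * (ENNReal.ofReal (1 / ((n:ℝ) + 1)) * ∑ p ∈ F n, wt μ p) := by
          rw [Finset.mul_sum, Finset.mul_sum]
      _ ≤ _ := by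
          gcongr
          rw [ENNReal.le_div_iff_mul_le (Or.inl (by simpa using hα)) (Or.inl ENNReal.ofReal_ne_top), mul_comm]
          exact le_add_self.trans (hle n)
  have hTlim : Tendsto (fun n => ∫⁻ x, ENNReal.ofReal (T n x) ∂μ) atTop (𝓝 0) := by
    have hK : (I + δ) / ENNReal.ofReal α ≠ ∞ := ENNReal.div_ne_top hcfin.ne (by simpa using hα)
    have e1 : Tendsto (fun n : ℕ => ENNReal.ofReal (1 / ((n:ℝ) + 1))) atTop (𝓝 0) := by
      have := ENNReal.tendsto_ofReal (tendsto_one_div_add_atTop_nhds_zero_nat (𝕜 := ℝ))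
      simpa using this
    have e2 := ENNReal.Tendsto.const_mul (a := (C4 : ℝ≥0∞)) (ENNReal.Tendsto.mul_const e1 (Or.inr hK)) (Or.inr ENNReal.coe_ne_top)
    rw [zero_mul, mul_zero] at e2
    exact tendsto_of_tendsto_of_tendsto_of_le_of_le tendsto_const_nhds e2 (fun _ => by positivity) hTint
  have hconv : L1LocConv μ Ω (fun n x => v (i n) x * (1 - T n x)) (E.indicator (fun _ => (1:ℝ))) := by
    intro x hx
    obtain ⟨r, hr, hc⟩ := hA.conv x hx
    refine ⟨r, hr, ?_⟩
    have hc' := (hc.comp (tendsto_atTop_mono hin tendsto_id)).add hTlim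
    rw [add_zero] at hc'
    refine tendsto_of_tendsto_of_tendsto_of_le_of_le tendsto_const_nhds hc' (fun _ => by positivity) fun n => ?_
    have hTm : Measurable (T n) := (tents_lip (fun p hp => by
      have := (hFb n p hp).1.pos; positivity)).continuous.measurable
    calc ∫⁻ y in Ω ∩ ball x r, ENNReal.ofReal |v (i n) y * (1 - T n y) - E.indicator (fun _ => (1:ℝ)) y| ∂μ
        ≤ ∫⁻ y in Ω ∩ ball x r, (ENNReal.ofReal |v (i n) y - E.indicator (fun _ => (1:ℝ)) y| + ENNReal.ofReal (T n y)) ∂μ := by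
          refine lintegral_mono fun y => ?_
          have ht0 : 0 ≤ T n y := tents_nonneg _ _ _ _
          rw [← ENNReal.ofReal_add (abs_nonneg _) ht0]
          refine ENNReal.ofReal_le_ofReal ?_
          have e : v (i n) y * (1 - T n y) - E.indicator (fun _ => (1:ℝ)) y =
            (v (i n) y - E.indicator (fun _ => (1:ℝ)) y) - v (i n) y * T n y := by ring
          rw [e]
          refine (abs_sub _ _).trans ?_
          have h0 := hA.nonneg (i n) y
          have h1 := hA.le_one (i n) y
          rw [abs_of_nonneg (mul_nonneg h0 ht0)]
          nlinarith
      _ = ∫⁻ y in Ω ∩ ball x r, ENNReal.ofReal |v (i n) y - E.indicator (fun _ => (1:ℝ)) y| ∂μ + ∫⁻ y in Ω ∩ ball x r, ENNReal.ofReal (T n y) ∂μ :=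
          lintegral_add_right _ hTm.ennreal_ofReal
      _ ≤ _ := by
          refine add_le_add le_rfl (setLIntegral_le_lintegral _ _)
  have hδI : δ ≤ I := le_add_self.trans (hbound 0)
  have hI0 : I ≠ 0 := fun h0 => hδ0 (le_antisymm (h0 ▸ hδI) zero_le)
  have hfinal : I ≤ I - δ := tvOpen_le hΩ _ h hL hh hconv (lt_of_le_of_lt tsub_le_self hfin)
    (fun n => ENNReal.le_sub_of_add_le_right hδt (hbound n))
  exact absurd (ENNReal.sub_lt_self hfin.ne hI0 hδ0) (not_lt.2 hfinal)

/-- Union of bad balls is small. -/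
lemma bad_union {μ : Measure X} [ProperSpace X] {Ω E : Set X} {α R ε : ℝ}
    (hF : ∀ F : Finset (X × ℝ), (∀ p ∈ F, Bad μ Ω E α p ∧ p.2 ≤ R) →
      ((F : Set (X × ℝ)).PairwiseDisjoint fun p => closedBall p.1 (4 * p.2)) →
      ∑ p ∈ F, wt μ p ≤ ENNReal.ofReal ε) :
    ∃ u : Set (X × ℝ), u.Countable ∧ (∀ p ∈ u, 0 < p.2 ∧ p.2 ≤ R) ∧
      (∀ p, Bad μ Ω E α p → p.2 ≤ R → ∃ q ∈ u, ball p.1 p.2 ⊆ ball q.1 (24 * q.2)) ∧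
      ∑' p : u, wt μ p ≤ ENNReal.ofReal ε := by
  obtain ⟨u, hut, huc, hud, hcov⟩ := vitali6 {p : X × ℝ | Bad μ Ω E α p ∧ p.2 ≤ R} (fun p => p.1) (fun p => 4 * p.2) (4 * R)
    (fun p hp => by have := hp.1.pos; positivity) (fun p hp => by have := hp.2; linarith)
  refine ⟨u, huc, fun p hp => ⟨(hut hp).1.pos, (hut hp).2⟩, fun p hp hpR => ?_, ?_⟩
  · obtain ⟨q, hq, hs⟩ := hcov p ⟨hp, hpR⟩
    refine ⟨q, hq, ?_⟩
    rw [show 24 * q.2 = 6 * (4 * q.2) by ring]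
    exact (ball_subset_closedBall.trans (closedBall_subset_closedBall (by linarith [hp.pos]))).trans hs
  · rw [ENNReal.tsum_eq_iSup_sum]
    refine iSup_le fun t => ?_
    have := hF (t.map (Function.Embedding.subtype _)) (fun p hp => by
      obtain ⟨q, hq, rfl⟩ := Finset.mem_map.1 hp
      exact hut q.2) (by
      refine hud.subset ?_
      intro p hp
      obtain ⟨q, hq, rfl⟩ := Finset.mem_map.1 hp
      exact q.2)
    rw [Finset.sum_map] at this
    exact this


lemma ext_of_seq {μ : Measure X} {Cd : ℝ} (hd : Doubling μ Cd) {E : Set X} {y : X} {α0 s0 : ℝ}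
    (hs0 : 0 < s0)
    (h : ∀ j : ℕ, ∀ᶠ k : ℕ in atTop, μ (ball y ((1/4)^k * s0) ∩ E) <
      ENNReal.ofReal (α0 * (1/2)^j) * μ (ball y ((1/4)^k * s0))) : y ∈ mExterior μ E := by
  obtain ⟨C4, hC4, hC4'⟩ := hd.scale 4
  change Tendsto _ _ _
  rw [ENNReal.tendsto_nhds_zero]
  intro η hη
  have hlim : Tendsto (fun j : ℕ => ENNReal.ofReal (α0 * (1/2)^j) * C4) atTop (𝓝 0) := by
    have h1 : Tendsto (fun j : ℕ => α0 * (1/2:ℝ)^j) atTop (𝓝 (α0 * 0)) :=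
      (tendsto_pow_atTop_nhds_zero_of_lt_one (by norm_num) (by norm_num)).const_mul _
    have h2 := ENNReal.Tendsto.mul_const (b := (C4:ℝ≥0∞)) (ENNReal.tendsto_ofReal h1) (Or.inr ENNReal.coe_ne_top)
    simpa using h2
  obtain ⟨j, hj⟩ := (hlim.eventually (gt_mem_nhds hη)).exists
  obtain ⟨K, hK⟩ := eventually_atTop.1 (h j)
  have hsK : 0 < (1/4:ℝ)^K * s0 := by positivity
  filter_upwards [Ioo_mem_nhdsGT hsK] with r hr
  obtain ⟨hr0, hrK⟩ := hr
  have hx1 : r / s0 < (1/4:ℝ)^K := (div_lt_iff₀ hs0).2 hrK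
  obtain ⟨n, hn1, hn2⟩ := exists_nat_pow_near_of_lt_one (show 0 < r / s0 by positivity)
    (hx1.le.trans (pow_le_one₀ (by norm_num) (by norm_num))) (show (0:ℝ) < 1/4 by norm_num) (by norm_num)
  have hnK : K ≤ n := by
    have := (pow_lt_pow_iff_right_of_lt_one₀ (show (0:ℝ) < 1/4 by norm_num) (by norm_num)).1 (hn1.trans hx1)
    omega
  rw [lt_div_iff₀ hs0] at hn1
  rw [div_le_iff₀ hs0] at hn2
  refine ENNReal.div_le_of_le_mul ?_
  calc μ (ball y r ∩ E) ≤ μ (ball y ((1/4)^n * s0) ∩ E) := by gcongr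
    _ ≤ ENNReal.ofReal (α0 * (1/2)^j) * μ (ball y ((1/4)^n * s0)) := (hK n hnK).le
    _ ≤ ENNReal.ofReal (α0 * (1/2)^j) * μ (ball y (4 * r)) := by
        refine mul_le_mul' le_rfl (measure_mono (ball_subset_ball ?_))
        rw [pow_succ] at hn1
        linarith
    _ ≤ ENNReal.ofReal (α0 * (1/2)^j) * (C4 * μ (ball y r)) := by gcongr; exact hC4' y r hr0
    _ ≤ η * μ (ball y r) := by rw [← mul_assoc]; gcongr

lemma exists_bad {μ : Measure X} {Cd : ℝ} (hd : Doubling μ Cd) {Ω E : Set X} {y : X} {α0 s0 : ℝ}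
    (hα0 : 0 < α0) (hs0 : 0 < s0) (hsub : closedBall y (4 * s0) ⊆ Ω)
    (h0 : μ (ball y s0 ∩ E) < ENNReal.ofReal α0 * μ (ball y s0)) (hy : y ∉ mExterior μ E)
    {R : ℕ → ℝ} (hR : ∀ j, 0 < R j) (hs0R : s0 ≤ R 0) :
    ∃ j : ℕ, ∃ r : ℝ, Bad μ Ω E (α0 * (1/2)^j) (y, r) ∧ r ≤ R j := by
  classical
  have hex : ∃ j : ℕ, ∃ᶠ k : ℕ in atTop, ENNReal.ofReal (α0 * (1/2)^j) * μ (ball y ((1/4)^k * s0)) ≤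
      μ (ball y ((1/4)^k * s0) ∩ E) := by
    by_contra hcon
    push Not at hcon
    refine hy (ext_of_seq hd hs0 (α0 := α0) fun j => ?_)
    have := hcon j
    simpa only [not_frequently, not_le] using this
  have hmk : ∀ (j m : ℕ), ENNReal.ofReal (α0 * (1/2)^j) * μ (ball y ((1/4)^(m+1) * s0)) ≤
      μ (ball y ((1/4)^(m+1) * s0) ∩ E) → μ (ball y ((1/4)^m * s0) ∩ E) ≤
      ENNReal.ofReal (2 * (α0 * (1/2)^j)) * μ (ball y ((1/4)^m * s0)) → 
      Bad μ Ω E (α0 * (1/2)^j) (y, (1/4)^(m+1) * s0) := by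
    intro j m h1 h2
    have e : 4 * ((1/4:ℝ)^(m+1) * s0) = (1/4)^m * s0 := by rw [pow_succ]; ring
    refine ⟨by simp only; positivity, ?_, h1, ?_⟩
    · simp only; rw [e]
      refine (closedBall_subset_closedBall ?_).trans hsub
      have : (1/4:ℝ)^m ≤ 1 := pow_le_one₀ (by norm_num) (by norm_num)
      nlinarith
    · simp only; rw [e]; exact h2
  have hj := Nat.find_spec hex
  have hjmin := fun m => Nat.find_min hex (m := m)
  set j := Nat.find hex
  clear_value j
  rcases j with _ | j
  · have hex2 := hj.exists
    have hk := Nat.find_spec hex2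
    have hkmin := fun m => Nat.find_min hex2 (m := m)
    set k := Nat.find hex2
    clear_value k
    rcases k with _ | k
    · simp only [pow_zero, one_mul, mul_one] at hk
      exact absurd h0 (not_lt.2 hk)
    · have h2 := hkmin k (by omega)
      push Not at h2
      refine ⟨0, _, hmk 0 k hk (h2.le.trans ?_), ?_⟩
      · refine mul_le_mul' (ENNReal.ofReal_le_ofReal ?_) le_rfl
        have : 0 < α0 * (1/2:ℝ)^0 := by positivity
        linarith
      · have : (1/4:ℝ)^(k+1) ≤ 1 := pow_le_one₀ (by norm_num) (by norm_num)
        nlinarith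
  · have h2 := hjmin j (by omega)
    simp only [not_frequently, not_le] at h2
    obtain ⟨K, hK⟩ := eventually_atTop.1 h2
    have hlim : Tendsto (fun k : ℕ => (1/4:ℝ)^k * s0) atTop (𝓝 (0 * s0)) :=
      (tendsto_pow_atTop_nhds_zero_of_lt_one (by norm_num) (by norm_num)).mul_const _
    rw [zero_mul] at hlim
    obtain ⟨k, hk, hkK, hkR⟩ := (hj.and_eventually ((eventually_ge_atTop (K+1)).and
      (hlim.eventually (gt_mem_nhds (hR (j+1)))))).exists
    obtain ⟨m, rfl⟩ : ∃ m, k = m + 1 := ⟨k - 1, by omega⟩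
    refine ⟨j+1, _, hmk (j+1) m hk ((hK m (by omega)).le.trans ?_), hkR.le⟩
    refine mul_le_mul' (ENNReal.ofReal_le_ofReal ?_) le_rfl
    rw [pow_succ]; linarith

lemma ext_quasi {μ : Measure X} [ProperSpace X] {Cd CP lam : ℝ} (hd : Doubling μ Cd)
    (hp : Poincare μ CP lam) {Ω E : Set X} (hΩ : IsOpen Ω) (hE : MeasurableSet E)
    (hfin : perimOpen μ E Ω < ∞) : QuasiOpen μ (mExterior μ E ∩ Ω) := by
  intro ε hε
  obtain ⟨C, hC, hC'⟩ := hd.scale 48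
  have hCp : (0:ℝ) < C := lt_of_lt_of_le one_pos (by exact_mod_cast hC)
  obtain ⟨C3, hC3, hC3'⟩ := hd.scale 3
  have hC3p : (0:ℝ) < C3 := lt_of_lt_of_le one_pos (by exact_mod_cast hC3)
  obtain ⟨α0, hα0, hML⟩ := main_lemma hd hp
  have hRex := fun j : ℕ => hML hΩ hE hfin (α0 * (1/2)^j) (by positivity)
    (mul_le_of_le_one_right hα0.le (pow_le_one₀ (by norm_num) (by norm_num))) (ε / (8 * C) * (1/2)^j) (by positivity)
  choose R hR0 hR1 hRF using hRex
  choose u huc hur hucov husum using fun j => bad_union (hRF j)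
  set G : Set X := ⋃ (j : ℕ) (p : X × ℝ) (_ : Bad μ Ω E (α0 * (1/2)^j) p ∧ p.2 ≤ R j), ball p.1 p.2 with hG
  have hGo : IsOpen G := isOpen_iUnion fun j => isOpen_iUnion fun p => isOpen_iUnion fun _ => isOpen_ball
  refine ⟨G, hGo, ?_, ?_⟩
  · have := fun j => (huc j).to_subtype
    have hle := capa_le (μ := μ) (ι := Σ j : ℕ, u j) (G := G) (fun q => q.2.1.1) (fun q => 24 * q.2.1.2)
      (fun q => by have := (hur q.1 _ q.2.2).1; positivity) (by
        refine iUnion_subset fun j => iUnion₂_subset fun p hp => ?_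
        obtain ⟨q, hq, hs⟩ := hucov j p hp.1 hp.2
        exact hs.trans (subset_iUnion_of_subset ⟨j, ⟨q, hq⟩⟩ le_rfl))
    refine hle.trans_lt ?_
    calc _ ≤ ∑' q : (Σ j : ℕ, u j), ENNReal.ofReal (2 * C) * wt μ q.2.1 := by
          refine ENNReal.tsum_le_tsum fun q => ?_
          obtain ⟨h1, h2⟩ := hur q.1 _ q.2.2
          have h3 : q.2.1.2 ≤ 1 := h2.trans (hR1 _)
          rw [show 2 * (24 * q.2.1.2) = 48 * q.2.1.2 by ring]
          have e : (1 : ℝ≥0∞) + ENNReal.ofReal (1 / (24 * q.2.1.2)) ≤ ENNReal.ofReal (2 * (1 / q.2.1.2)) := by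
            rw [← ENNReal.ofReal_one, ← ENNReal.ofReal_add zero_le_one (by positivity)]
            refine ENNReal.ofReal_le_ofReal ?_
            have e1 : 1 ≤ 1 / q.2.1.2 := (one_le_div h1).2 h3
            have e2 : 1 / (24 * q.2.1.2) ≤ 1 / q.2.1.2 := one_div_le_one_div_of_le h1 (by linarith)
            linarith
          calc _ ≤ (C * μ (ball q.2.1.1 q.2.1.2)) * ENNReal.ofReal (2 * (1 / q.2.1.2)) :=
                mul_le_mul' (hC' _ _ h1) e
            _ = _ := by
                rw [wt, ENNReal.ofReal_mul (by norm_num), ENNReal.ofReal_mul (by norm_num), ENNReal.ofReal_coe_nnreal]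
                ring
      _ = ∑' j : ℕ, ENNReal.ofReal (2 * C) * ∑' p : u j, wt μ p.1 := by
          rw [ENNReal.tsum_sigma']
          simp_rw [ENNReal.tsum_mul_left]
      _ ≤ ∑' j : ℕ, ENNReal.ofReal (ε / 4 * (1/2)^j) := by
          refine ENNReal.tsum_le_tsum fun j => ?_
          calc _ ≤ ENNReal.ofReal (2 * C) * ENNReal.ofReal (ε / (8 * C) * (1/2)^j) := by gcongr; exact husum j
            _ = _ := by
              rw [← ENNReal.ofReal_mul (by positivity)]
              congr 1
              field_simp
              norm_num
      _ = ENNReal.ofReal (ε / 4 * 2) := by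
          rw [← ENNReal.ofReal_tsum_of_nonneg (fun j => by positivity) (summable_geometric_two.mul_left _),
            tsum_mul_left, tsum_geometric_two]
      _ < _ := by
          rw [ENNReal.ofReal_lt_ofReal_iff hε]; linarith
  · rw [isOpen_iff_mem_nhds]
    rintro x (⟨hxE, hxΩ⟩ | hxG)
    · obtain ⟨δ, hδ, hδΩ⟩ := Metric.isOpen_iff.1 hΩ x hxΩ
      have hxE : Tendsto _ _ _ := hxE
      have hev := hxE.eventually (gt_mem_nhds (show (0:ℝ≥0∞) < ENNReal.ofReal (α0 / (2 * C3)) by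
        simpa using by positivity))
      have hsmall : 0 < min (2 * R 0) (δ / 3) := lt_min (by have := hR0 0; positivity) (by positivity)
      obtain ⟨s, hs, hs0, hsm⟩ := (hev.and (Ioo_mem_nhdsGT hsmall)).exists
      have hsR : s < 2 * R 0 := hsm.trans_le (min_le_left _ _)
      have hsδ : s < δ / 3 := hsm.trans_le (min_le_right _ _)
      filter_upwards [ball_mem_nhds x (show 0 < s / 2 by positivity)] with y hy
      have hy : dist y x < s / 2 := hy
      have hsubb : closedBall y (4 * (s/2)) ⊆ Ω := (closedBall_subset_ball' (by linarith)).trans hδΩ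
      by_cases hyE : y ∈ mExterior μ E
      · exact Or.inl ⟨hyE, hsubb (mem_closedBall_self (by positivity))⟩
      right
      obtain ⟨j, r, hbad, hr⟩ := exists_bad hd hα0 (s0 := s/2) (by positivity) hsubb (by
        have hs' : μ (ball x s ∩ E) < ENNReal.ofReal (α0 / (2 * C3)) * μ (ball x s) := by
          rwa [ENNReal.div_lt_iff (Or.inl (hd.pos x hs0).ne') (Or.inl (hd.fin x s).ne)] at hs
        calc μ (ball y (s/2) ∩ E) ≤ μ (ball x s ∩ E) := by
              gcongr; exact ball_subset_ball' (by linarith)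
          _ ≤ ENNReal.ofReal (α0 / (2 * C3)) * μ (ball x s) := hs'.le
          _ ≤ ENNReal.ofReal (α0 / (2 * C3)) * μ (ball y (3 * (s/2))) := by
              gcongr; exact ball_subset_ball' (by rw [dist_comm]; linarith)
          _ ≤ ENNReal.ofReal (α0 / (2 * C3)) * (C3 * μ (ball y (s/2))) := by
              gcongr; exact hC3' y _ (by positivity)
          _ = ENNReal.ofReal (α0 / 2) * μ (ball y (s/2)) := by
              rw [← mul_assoc, ← ENNReal.ofReal_coe_nnreal, ← ENNReal.ofReal_mul (by positivity)]
              congr 2; field_simp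
          _ < _ := by
              rw [mul_comm, mul_comm (ENNReal.ofReal _)]
              refine ENNReal.mul_lt_mul_right (hd.pos y (by positivity)).ne' (hd.fin y _).ne ?_
              rw [ENNReal.ofReal_lt_ofReal_iff hα0]; linarith) hyE hR0 (by linarith)
      rw [hG]
      refine mem_iUnion.2 ⟨j, mem_iUnion₂.2 ⟨(y, r), ⟨hbad, hr⟩, ?_⟩⟩
      exact mem_ball_self hbad.pos
    · exact mem_of_superset (hGo.mem_nhds hxG) subset_union_right

lemma L1LocConv.congr {μ : Measure X} {Ω : Set X} {v : ℕ → X → ℝ} {u u' : X → ℝ} (h : u =ᵐ[μ] u')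
    (hc : L1LocConv μ Ω v u) : L1LocConv μ Ω v u' := by
  intro x hx
  obtain ⟨r, hr, ht⟩ := hc x hx
  refine ⟨r, hr, ht.congr fun i => lintegral_congr_ae ?_⟩
  filter_upwards [ae_restrict_of_ae h] with y hy
  rw [hy]

lemma perim_congr {μ : Measure X} {Ω E E' : Set X} (h : E =ᵐ[μ] E') : perimOpen μ E Ω = perimOpen μ E' Ω := by
  have h1 : E.indicator (fun _ => (1:ℝ)) =ᵐ[μ] E'.indicator (fun _ => (1:ℝ)) := indicator_ae_eq_of_ae_eq_set h
  have h2 : ∀ v, L1LocConv μ Ω v (E.indicator (fun _ => (1:ℝ))) ↔ L1LocConv μ Ω v (E'.indicator (fun _ => (1:ℝ))) :=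
    fun v => ⟨fun k => k.congr h1, fun k => k.congr h1.symm⟩
  unfold perimOpen tvOpen
  simp only [h2]

lemma mExterior_congr {μ : Measure X} {E E' : Set X} (h : E =ᵐ[μ] E') : mExterior μ E = mExterior μ E' := by
  have : ∀ x r, μ (ball x r ∩ E) = μ (ball x r ∩ E') := fun x r => measure_congr (EventuallyEq.rfl.inter h)
  unfold mExterior
  simp only [this]

lemma perim_compl {μ : Measure X} [SecondCountableTopology X] {Ω E : Set X} (hΩ : IsOpen Ω)
    (h : perimOpen μ E Ω < ∞) : perimOpen μ Eᶜ Ω < ∞ := by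
  obtain ⟨c, hc, hct⟩ := exists_between h
  obtain ⟨v, g, hA⟩ := exists_approx hc
  refine lt_of_le_of_lt (tvOpen_le hΩ (fun i x => 1 - v i x) g ?_ ?_ ?_ hct (fun i => (hA.lt i).le)) hct
  · intro i x hx
    obtain ⟨r, hr, K, hK⟩ := hA.lip i x hx
    refine ⟨r, hr, K, LipschitzOnWith.of_dist_le_mul fun a ha b hb => ?_⟩
    have := hK.dist_le_mul a ha b hb
    rw [Real.dist_eq] at this ⊢
    rw [abs_sub_comm] at this
    convert this using 2
    ring
  · intro i
    refine ⟨(hA.meas i).aemeasurable, 0, measurable_zero, by simp, ?_⟩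
    rintro γ ⟨hγ, hn⟩
    refine absurd ?_ hn
    have := hA.ug i γ hγ
    unfold UGIneq at this ⊢
    rw [abs_sub_comm] at this
    convert this using 3
    ring
  · intro x hx
    obtain ⟨r, hr, ht⟩ := hA.conv x hx
    refine ⟨r, hr, ht.congr fun i => lintegral_congr fun y => ?_⟩
    congr 1
    rw [abs_sub_comm]
    congr 1
    by_cases hy : y ∈ E
    · simp [hy]
    · simp [hy]

lemma quasi_aux (μ : Measure X) (hcomp : CompleteSpace X)
    (hdoub : ∃ Cd : ℝ, Doubling μ Cd) (hpoin : ∃ CP lam : ℝ, Poincare μ CP lam)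
    (Ω : Set X) (hΩ : IsOpen Ω) (E : Set X) (hE : NullMeasurableSet E μ)
    (hfin : perimOpen μ E Ω < ∞) :
    QuasiOpen μ (mInterior μ E ∩ Ω) ∧ QuasiOpen μ (mExterior μ E ∩ Ω) := by
  obtain ⟨Cd, hd⟩ := hdoub
  obtain ⟨CP, lam, hp⟩ := hpoin
  have hprop := hd.proper
  have key : ∀ A : Set X, NullMeasurableSet A μ → perimOpen μ A Ω < ∞ → QuasiOpen μ (mExterior μ A ∩ Ω) := by
    intro A hA hAf
    obtain ⟨A', -, hA', hAA⟩ := hA.exists_measurable_superset_ae_eq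
    rw [mExterior_congr hAA.symm]
    exact ext_quasi hd hp hΩ hA' (by rwa [perim_congr hAA])
  have : mInterior μ E = mExterior μ Eᶜ := by
    unfold mInterior mExterior
    simp only [sdiff_eq]
  exact ⟨this ▸ key Eᶜ hE.compl (perim_compl hΩ hfin), key E hE hfin⟩


end Helpers

/-- If `Ω` is open and `E` is `μ`-measurable with `P(E,Ω) < ∞`, then
the sets `I_E ∩ Ω` and `O_E ∩ Ω` are `1`-quasiopen, where `I_E` and `O_E` are the
measure-theoretic interior and exterior of `E`. -/
theorem mInterior_mExterior_quasiopen
    (μ : Measure X) (hcomp : CompleteSpace X)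
    (hdoub : ∃ Cd : ℝ, Doubling μ Cd) (hpoin : ∃ CP lam : ℝ, Poincare μ CP lam)
    (Ω : Set X) (hΩ : IsOpen Ω) (E : Set X) (hE : NullMeasurableSet E μ)
    (hfin : perimOpen μ E Ω < ∞) :
    QuasiOpen μ (mInterior μ E ∩ Ω) ∧ QuasiOpen μ (mExterior μ E ∩ Ω) := by
  exact quasi_aux μ hcomp hdoub hpoin Ω hΩ E hE hfin

end PaperBV
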